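/- arXiv:2212.14792 — 4 statements merged into one kernel-verified Lean document; each statement's English description precedes it below -/
import Mathlib

section
/- Let Γ be a connected graph. If depth R/I^{(t)} = 1 for some t ≥ 1, then depth R/I^{(t+1)} = 1. -/
open MvPolynomial

noncomputable section

/-- The edge ideal of a graph `Γ` on vertex set `σ`, in `k[x_i : i ∈ σ]`. -/
def edgeIdeal (k : Type) [Field k] {σ : Type} (Γ : SimpleGraph σ) :
    Ideal (MvPolynomial σ k) :=
  Ideal.span { m | ∃ i j : σ, Γ.Adj i j ∧ m = X i * X j }

/-- The maximal graded ideal `(x_i : i ∈ σ)` of `k[x_i : i ∈ σ]`. -/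
def maxIdeal (k : Type) [Field k] (σ : Type) : Ideal (MvPolynomial σ k) :=
  Ideal.span (Set.range (X : σ → MvPolynomial σ k))

/-- `depth R/J = 0`, i.e. the maximal graded ideal is an associated prime of `R/J`. -/
def DepthZero (k : Type) [Field k] {σ : Type} (J : Ideal (MvPolynomial σ k)) : Prop :=
  maxIdeal k σ ∈ associatedPrimes (MvPolynomial σ k) (MvPolynomial σ k ⧸ J)

/-- The `i`-th local cohomology of `R/J` with support in the maximal graded ideal. -/
def locCoh (k : Type) [Field k] {σ : Type} (J : Ideal (MvPolynomial σ k)) (i : ℕ) :=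
  (localCohomology (maxIdeal k σ) i).obj (ModuleCat.of _ (MvPolynomial σ k ⧸ J))

/-- `depth R/J`, defined as the least `i` with `H^i_m(R/J) ≠ 0`. -/
def rDepth (k : Type) [Field k] {σ : Type} (J : Ideal (MvPolynomial σ k)) : ℕ :=
  sInf { i | Nontrivial (locCoh k J i) }

/-- A set `U` of vertices is dominating: every vertex outside `U` is adjacent to a
vertex of `U`. -/
def Dominating {σ : Type} (Γ : SimpleGraph σ) (U : Set σ) : Prop :=
  ∀ v ∉ U, ∃ u ∈ U, Γ.Adj u v

/-- The closed neighborhood `N[v]` of a vertex. -/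
def closedNbhd {σ : Type} (Γ : SimpleGraph σ) (v : σ) : Set σ :=
  insert v { u | Γ.Adj v u }

/-- The closed neighborhood `N[C]` of a set of vertices. -/
def closedNbhdSet {σ : Type} (Γ : SimpleGraph σ) (C : Set σ) : Set σ :=
  ⋃ v ∈ C, closedNbhd Γ v

/-- An odd cycle of length `m` (given as an injective map `ZMod m → σ` with consecutive
vertices adjacent) in `Γ`. -/
def IsOddCycle {σ : Type} (Γ : SimpleGraph σ) (m : ℕ) (c : ZMod m → σ) : Prop :=
  Odd m ∧ 3 ≤ m ∧ Function.Injective c ∧ ∀ i, Γ.Adj (c i) (c (i + 1))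

/-- `F` is an independent set of `Γ`. -/
def IsIndep {σ : Type} [Fintype σ] [DecidableEq σ] (Γ : SimpleGraph σ) (F : Finset σ) : Prop :=
  ∀ i ∈ F, ∀ j ∈ F, ¬ Γ.Adj i j

/-- `F` is a maximal independent set of `Γ`. -/
def IsMaxIndep {σ : Type} [Fintype σ] [DecidableEq σ] (Γ : SimpleGraph σ) (F : Finset σ) : Prop :=
  IsIndep Γ F ∧ ∀ G : Finset σ, IsIndep Γ G → F ⊆ G → G = F

/-- The prime ideal `P_F = (x_i : i ∉ F)`. -/
def PF (k : Type) [Field k] {σ : Type} [Fintype σ] [DecidableEq σ] (F : Finset σ) :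
    Ideal (MvPolynomial σ k) :=
  Ideal.span { m | ∃ i ∉ F, m = X i }

/-- The `t`-th symbolic power `I^{(t)} = ⋂_{F maximal independent} P_F^t` of the edge ideal. -/
def symbPow (k : Type) [Field k] {σ : Type} [Fintype σ] [DecidableEq σ]
    (Γ : SimpleGraph σ) (t : ℕ) : Ideal (MvPolynomial σ k) :=
  ⨅ F ∈ { F : Finset σ | IsMaxIndep Γ F }, PF k F ^ t

/-- The monomial `x^a`. -/
def xPow (k : Type) [Field k] {σ : Type} [Fintype σ] (a : σ → ℕ) : MvPolynomial σ k :=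
  ∏ i, X i ^ a i

/-- The localization `R[x_i^{-1} : i ∈ F]`. -/
abbrev locAt (k : Type) [Field k] {σ : Type} (F : Finset σ) :=
  Localization (Submonoid.closure ((fun i => (X i : MvPolynomial σ k)) '' (F : Set σ)))

/-- The degree complex `Δ_a(J) = {F : x^a ∉ J·R[x_i^{-1} : i ∈ F]}` of a monomial ideal `J`. -/
def degComplex (k : Type) [Field k] {σ : Type} [Fintype σ] (J : Ideal (MvPolynomial σ k))
    (a : σ → ℕ) : Set (Finset σ) :=
  { F | algebraMap (MvPolynomial σ k) (locAt k F) (xPow k a) ∉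
      J.map (algebraMap (MvPolynomial σ k) (locAt k F)) }

/-- `F` is a facet (maximal face) of the complex `Δ`. -/
def IsFacet {σ : Type} (Δ : Set (Finset σ)) (F : Finset σ) : Prop :=
  F ∈ Δ ∧ ∀ G ∈ Δ, F ⊆ G → G = F

/-- The complex `Δ` is disconnected: its vertex set splits into two nonempty parts such that
no face meets both. -/
def ComplexDisconnected {σ : Type} (Δ : Set (Finset σ)) : Prop :=
  ∃ A B : Set σ, A.Nonempty ∧ B.Nonempty ∧ Disjoint A B ∧
    (∀ i, {i} ∈ Δ ↔ i ∈ A ∪ B) ∧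
    ∀ F ∈ Δ, ¬ ((∃ i ∈ F, i ∈ A) ∧ (∃ j ∈ F, j ∈ B))

/-- The polynomial ring `R_v = k[x_i : i ≠ v]`. -/
abbrev Rv (k : Type) [Field k] {σ : Type} (v : σ) := MvPolynomial { i : σ // i ≠ v } k

/-- The localization `R[x_v^{-1}]`. -/
abbrev LocAway (k : Type) [Field k] {σ : Type} (v : σ) :=
  Localization.Away (X v : MvPolynomial σ k)

/-- For an ideal `I` of `R`, the ideal `I_v = I·R[x_v^{-1}] ∩ R_v` of `R_v`. -/
def idealV (k : Type) [Field k] {σ : Type} (I : Ideal (MvPolynomial σ k)) (v : σ) :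
    Ideal (Rv k v) :=
  Ideal.comap ((algebraMap (MvPolynomial σ k) (LocAway k v)).comp
      (MvPolynomial.rename (Subtype.val : { i : σ // i ≠ v } → σ)).toRingHom)
    (I.map (algebraMap (MvPolynomial σ k) (LocAway k v)))

/-- The edge ideal of the induced subgraph `Γ_U` in `k[x_i : i ∈ U]`. -/
def edgeIdealOn (k : Type) [Field k] {σ : Type} (Γ : SimpleGraph σ) (U : Set σ) :
    Ideal (MvPolynomial U k) :=
  Ideal.span { m | ∃ i j : U, Γ.Adj (i : σ) (j : σ) ∧ m = X i * X j }

/-- `Γ` has no isolated vertices. -/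
def NoIsolated {σ : Type} (Γ : SimpleGraph σ) : Prop :=
  ∀ v : σ, ∃ u : σ, Γ.Adj v u

section LC
open CategoryTheory Limits Opposite
universe u
variable {R : Type u} [CommRing R]

def exMap {X Y : ChainComplex (ModuleCat.{u} R) ℕ} (φ : X ⟶ Y) (M : ModuleCat.{u} R) :
  Y.linearYonedaObj R M ⟶ X.linearYonedaObj R M :=
  (HomologicalComplex.unopFunctor _ _).map
    ((((linearYoneda R (ModuleCat.{u} R)).obj M).rightOp.mapHomologicalComplex _).map φ).op

lemma exMap_f {X Y : ChainComplex (ModuleCat.{u} R) ℕ} (φ : X ⟶ Y) (M : ModuleCat.{u} R) (i : ℕ)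
   (f : Y.X i ⟶ M) : ((exMap φ M).f i).hom f = (φ.f i ≫ f : X.X i ⟶ M) := rfl

lemma paste {C : Type*} [Category C] {A A' B B' D D' : C} (e : A ⟶ A') (p : A' ⟶ B') (q : B' ⟶ D')
    (p0 : A ⟶ B) (m : B ⟶ B') (q0 : B ⟶ D) (h : D ⟶ D') (h4 : e ≫ p = p0 ≫ m)
    (h3 : m ≫ q = q0 ≫ h) : e ≫ p ≫ q = (p0 ≫ q0) ≫ h := by
  rw [← Category.assoc, h4, Category.assoc, h3, Category.assoc]

lemma isoflip {C : Type*} [Category C] {A A' B B' : C} (e : A ≅ A') (p : B ≅ B') (m : A ⟶ B)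
   (m' : A' ⟶ B') (h : m ≫ p.hom = e.hom ≫ m') : e.inv ≫ m = m' ≫ p.inv := by
  rw [Iso.inv_comp_eq, ← Category.assoc, ← h]; simp

lemma ex_nat {X Y : ModuleCat.{u} R} (p : X ⟶ Y) (P : ProjectiveResolution X)
    (Q : ProjectiveResolution Y) (φ : P.complex ⟶ Q.complex)
    (comm : φ.f 0 ≫ Q.π.f 0 = P.π.f 0 ≫ p) (M : ModuleCat.{u} R) (n : ℕ) :
    (((Ext R (ModuleCat.{u} R) n).map p.op).app M) ≫ (P.isoExt n M).hom =
     (Q.isoExt n M).hom ≫ HomologicalComplex.homologyMap (exMap φ M) n := by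
  have h1 := congrArg Quiver.Hom.unop (ProjectiveResolution.isoLeftDerivedObj_inv_naturality p P Q φ comm ((linearYoneda R (ModuleCat.{u} R)).obj M).rightOp n)
  have h2 := congrArg Quiver.Hom.unop (isoflip _ _ _ _ (HomologicalComplex.homologyOp_hom_naturality (exMap φ M) n))
  exact paste _ _ _ _ _ _ _ h1 h2

/-- class of a cocycle. -/
lemma class_exists {K : CochainComplex (ModuleCat.{u} R) ℕ} (z : K.X 1) (hz : (K.d 1 2).hom z = 0) :
    ∃ x : K.homology 1, ∀ (L : CochainComplex (ModuleCat.{u} R) ℕ) (ψ : K ⟶ L), (HomologicalComplex.homologyMap ψ 1).hom x = 0 → ∃ w : L.X 0, (L.d 0 1).hom w = (ψ.f 1).hom z := by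
  let g : ModuleCat.of R R ⟶ K.X 1 := ModuleCat.ofHom (LinearMap.toSpanSingleton R _ z)
  have hg : g ≫ K.d 1 2 = 0 := by
    ext; simp [g, hz]
  let c := K.liftCycles g 2 (by simp) hg
  refine ⟨(c ≫ K.homologyπ 1).hom 1, fun L ψ h => ?_⟩
  have h1 : (L.pOpcycles 1).hom ((ψ.f 1).hom z) = 0 := by
    have : (c ≫ K.homologyπ 1 ≫ HomologicalComplex.homologyMap ψ 1 ≫ L.homologyι 1).hom 1 = 0 := by
      simp only [← Category.assoc]
      rw [ModuleCat.comp_apply, ModuleCat.comp_apply, h, map_zero]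
    have e : c ≫ K.homologyπ 1 ≫ HomologicalComplex.homologyMap ψ 1 ≫ L.homologyι 1 = g ≫ ψ.f 1 ≫ L.pOpcycles 1 := by
      simp [c]
    rw [e] at this
    simpa [g] using this
  have := ((L.sc 1).moduleCat_pOpcycles_eq_zero_iff ((ψ.f 1).hom z)).1 h1
  obtain ⟨w, hw⟩ := this
  have hex : ∃ i, ∃ w : L.X i, (L.d i 1).hom w = (ψ.f 1).hom z ∧ i = 0 := ⟨_, w, hw, by simp⟩
  obtain ⟨i, w, hw, rfl⟩ := hex
  exact ⟨w, hw⟩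

lemma homology_zero_of {K : CochainComplex (ModuleCat.{u} R) ℕ} 
   (h : ∀ z : K.X 1, (K.d 1 2).hom z = 0 → ∃ w, (K.d 0 1).hom w = z) : IsZero (K.homology 1) := by
  rw [← HomologicalComplex.exactAt_iff_isZero_homology, HomologicalComplex.exactAt_iff' K 0 1 2 (by simp) (by simp)]
  rw [ShortComplex.moduleCat_exact_iff]
  exact h

lemma homology_zero_of0 {K : CochainComplex (ModuleCat.{u} R) ℕ} 
   (h : ∀ z : K.X 0, (K.d 0 1).hom z = 0 → z = 0) : IsZero (K.homology 0) := by
  rw [← HomologicalComplex.exactAt_iff_isZero_homology, HomologicalComplex.exactAt_iff' K 0 0 1 (by simp) (by simp)]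
  rw [ShortComplex.moduleCat_exact_iff]
  intro z hz
  exact ⟨0, by rw [map_zero]; exact (h z hz).symm⟩

lemma factor_surj {A B M : Type*} [AddCommGroup A] [AddCommGroup B] [AddCommGroup M]
    [Module R A] [Module R B] [Module R M] (q : A →ₗ[R] B) (hq : Function.Surjective q)
    (z : A →ₗ[R] M) (h : ∀ a, q a = 0 → z a = 0) : ∃ f : B →ₗ[R] M, ∀ a, f (q a) = z a := by
  refine ⟨((LinearMap.ker q).liftQ z (fun a ha => h a ha)) ∘ₗ
    (q.quotKerEquivOfSurjective hq).symm.toLinearMap, fun a => ?_⟩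
  have : (q.quotKerEquivOfSurjective hq).symm (q a) = Submodule.Quotient.mk a := by
    rw [LinearEquiv.symm_apply_eq]; rfl
  rw [LinearMap.comp_apply, LinearEquiv.coe_coe, this]; exact Submodule.liftQ_apply _ _ _

/-- multiplicativity of a map from an ideal. -/
def IsMult {M : Type*} [AddCommGroup M] [Module R M] {I : Ideal R} (φ : I →ₗ[R] M) : Prop :=
  ∃ g : M, ∀ b : I, φ b = (b : R) • g

lemma alg_a {P1 P0 M : Type*} [AddCommGroup P1] [AddCommGroup P0] [AddCommGroup M]
    [Module R P1] [Module R P0] [Module R M] [Module.Projective R P0] (I : Ideal R)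
    (d : P1 →ₗ[R] P0) (e : P0 →ₗ[R] R ⧸ I) (he : Function.Surjective e)
    (hde : ∀ x, e x = 0 ↔ ∃ y, d y = x) (H : ∀ φ : I →ₗ[R] M, IsMult φ)
    (z : P1 →ₗ[R] M) (hz : ∀ y, d y = 0 → z y = 0) : ∃ w : P0 →ₗ[R] M, ∀ y, w (d y) = z y := by
  obtain ⟨f, hf⟩ := factor_surj d.rangeRestrict d.surjective_rangeRestrict z
    (fun a ha => hz a (by simpa using congrArg Subtype.val ha))
  obtain ⟨p0, hp0⟩ := he 1
  obtain ⟨β, hβ⟩ := Module.projective_lifting_property (Submodule.mkQ I) e (Submodule.mkQ_surjective I)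
  have hβ' : ∀ p, Ideal.Quotient.mk I (β p) = e p := fun p => congrArg (fun l => l p) hβ
  have hα : ∀ r : R, e (r • p0) = Ideal.Quotient.mk I r := by
    intro r
    rw [map_smul, hp0, Algebra.smul_def, mul_one]; rfl
  have hm : ∀ p : P0, e p = 0 → p ∈ LinearMap.range d := fun p hp => (hde p).1 hp
  let φ : I →ₗ[R] M := f ∘ₗ (((LinearMap.toSpanSingleton R P0 p0) ∘ₗ I.subtype).codRestrict _
    (fun b => hm _ (by
      change e ((b : R) • p0) = 0
      rw [hα, Ideal.Quotient.eq_zero_iff_mem]; exact b.2)))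
  obtain ⟨g, hg⟩ := H φ
  let w : P0 →ₗ[R] M := f ∘ₗ ((LinearMap.id - (LinearMap.toSpanSingleton R P0 p0) ∘ₗ β).codRestrict _
    (fun p => hm _ (by
      change e (p - β p • p0) = 0
      rw [map_sub, hα, hβ', sub_self]))) + (LinearMap.toSpanSingleton R M g) ∘ₗ β
  refine ⟨w, fun y => ?_⟩
  have hb : β (d y) ∈ I := by
    rw [← Ideal.Quotient.eq_zero_iff_mem, hβ', hde]; exact ⟨y, rfl⟩
  have h1 := hg ⟨_, hb⟩
  have h2 : w (d y) = (f (d.rangeRestrict y) - φ ⟨_, hb⟩) + β (d y) • g := by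
    simp only [w, φ, LinearMap.add_apply, LinearMap.comp_apply, LinearMap.toSpanSingleton_apply]
    rw [← map_sub]
    congr 1
  rw [h2, h1, hf]; simp

lemma alg_c {P1 P0 Q1 Q0 M : Type*} [AddCommGroup P1] [AddCommGroup P0] [AddCommGroup M]
    [AddCommGroup Q1] [AddCommGroup Q0] [Module R Q1] [Module R Q0]
    [Module R P1] [Module R P0] [Module R M] (I J : Ideal R) (hJI : J ≤ I)
    (d : P1 →ₗ[R] P0) (e : P0 →ₗ[R] R ⧸ J) (he : Function.Surjective e)
    (hde : ∀ x, e x = 0 ↔ ∃ y, d y = x)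
    (d' : Q1 →ₗ[R] Q0) (e' : Q0 →ₗ[R] R ⧸ I) 
    (ψ1 : P1 →ₗ[R] Q1) (ψ0 : P0 →ₗ[R] Q0) (hψ : ∀ y, d' (ψ1 y) = ψ0 (d y))
    (hψ' : ∀ x, e' (ψ0 x) = Submodule.mapQ J I LinearMap.id hJI (e x))
    (β : Q0 →ₗ[R] R) (hβ : ∀ x, Ideal.Quotient.mk I (β x) = e' x)
    (φ : I →ₗ[R] M) (z : Q1 →ₗ[R] M) (hz : ∀ y, ∃ h : β (d' y) ∈ I, z y = φ ⟨_, h⟩)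
    (h : P0 →ₗ[R] M) (hh : ∀ y, h (d y) = z (ψ1 y)) :
    IsMult (φ ∘ₗ Submodule.inclusion hJI) := by
  obtain ⟨p0, hp0⟩ := he 1
  have hu : β (ψ0 p0) - 1 ∈ I := by
    rw [← Ideal.Quotient.eq_zero_iff_mem, map_sub, hβ, hψ', hp0, sub_eq_zero]
    rfl
  refine ⟨h p0 - φ ⟨_, hu⟩, fun b => ?_⟩
  have : e ((b : R) • p0) = 0 := by
    rw [map_smul, hp0, Algebra.smul_def, mul_one]
    exact Ideal.Quotient.eq_zero_iff_mem.2 b.2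
  obtain ⟨y, hy⟩ := (hde _).1 this
  obtain ⟨h1, h2⟩ := hz (ψ1 y)
  have h3 := hh y
  rw [h2, hy, map_smul] at h3
  rw [smul_sub, h3, ← map_smul, ← map_sub]
  change φ _ = φ _
  congr 1
  ext
  simp only [Submodule.coe_inclusion, AddSubgroupClass.coe_sub, Submodule.coe_smul, smul_eq_mul]
  rw [hψ, hy]; simp; ring

section res
variable {I : Ideal R} (P : ProjectiveResolution (ModuleCat.of R (R ⧸ I)))

def resE : P.complex.X 0 →ₗ[R] R ⧸ I := (P.π.f 0).hom

lemma resE_surj : Function.Surjective (resE P) := by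
  have := (ModuleCat.epi_iff_surjective (P.π.f 0)).1 inferInstance
  exact this

lemma resE_exact (x : P.complex.X 0) : resE P x = 0 ↔ ∃ y, (P.complex.d 1 0).hom y = x := by
  constructor
  · intro h
    exact (ShortComplex.moduleCat_exact_iff _).1 P.exact₀ x h
  · rintro ⟨y, rfl⟩
    have := congrArg (fun l => l.hom y) P.complex_d_comp_π_f_zero
    exact this

lemma res_exact1 (x : P.complex.X 1) : (P.complex.d 1 0).hom x = 0 ↔ ∃ y, (P.complex.d 2 1).hom y = x := by
  constructor
  · intro h
    exact (ShortComplex.moduleCat_exact_iff _).1 (P.exact_succ 0) x h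
  · rintro ⟨y, rfl⟩
    have := congrArg (fun l => l.hom y) (P.complex.d_comp_d 2 1 0)
    exact this

instance : Module.Projective R (P.complex.X 0) := 
  (IsProjective.iff_projective (R := R) (P := P.complex.X 0)).2 (P.projective 0)

end res

lemma ext_one_zero (I : Ideal R) (M : ModuleCat.{u} R) (H : ∀ φ : I →ₗ[R] M, IsMult φ) :
    IsZero (((Ext R (ModuleCat.{u} R) 1).obj (op (ModuleCat.of R (R ⧸ I)))).obj M) := by
  let P := projectiveResolution (ModuleCat.of R (R ⧸ I))
  refine IsZero.of_iso ?_ (P.isoExt 1 M)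
  refine homology_zero_of fun z hz => ?_
  change P.complex.X 1 ⟶ M at z
  replace hz : P.complex.d 2 1 ≫ z = 0 := hz
  obtain ⟨w, hw⟩ := alg_a I (P.complex.d 1 0).hom (resE P) (resE_surj P) (resE_exact P) H z.hom
    (fun y hy => by
      obtain ⟨x, rfl⟩ := (res_exact1 P y).1 hy
      exact congrArg (fun l => l.hom x) hz)
  refine ⟨(ModuleCat.ofHom w : P.complex.X 0 ⟶ M), ?_⟩
  change P.complex.d 1 0 ≫ ModuleCat.ofHom w = z
  ext y
  exact hw y

lemma ext_zero_zero (I : Ideal R) (M : ModuleCat.{u} R) (H : ∀ x : M, (∀ b ∈ I, b • x = 0) → x = 0) :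
    IsZero (((Ext R (ModuleCat.{u} R) 0).obj (op (ModuleCat.of R (R ⧸ I)))).obj M) := by
  let P := projectiveResolution (ModuleCat.of R (R ⧸ I))
  refine IsZero.of_iso ?_ (P.isoExt 0 M)
  refine homology_zero_of0 fun z hz => ?_
  change P.complex.X 0 ⟶ M at z
  replace hz : P.complex.d 1 0 ≫ z = 0 := hz
  change z = 0
  ext p
  refine H _ fun b hb => ?_
  rw [← map_smul]
  have : resE P (b • p) = 0 := by
    rw [map_smul]
    obtain ⟨r, hr⟩ := Ideal.Quotient.mk_surjective (resE P p)
    rw [← hr, Algebra.smul_def]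
    change Ideal.Quotient.mk I b * Ideal.Quotient.mk I r = 0
    rw [Ideal.Quotient.eq_zero_iff_mem.2 hb, zero_mul]
  obtain ⟨y, hy⟩ := (resE_exact P _).1 this
  rw [← hy]
  exact congrArg (fun l => l.hom y) hz

lemma ext_one_elt (I : Ideal R) (M : ModuleCat.{u} R) (φ : I →ₗ[R] M) :
    ∃ x : (((Ext R (ModuleCat.{u} R) 1).obj (op (ModuleCat.of R (R ⧸ I)))).obj M),
     ∀ (J : Ideal R) (hJI : J ≤ I), 
      (((Ext R (ModuleCat.{u} R) 1).map (ModuleCat.ofHom (Submodule.mapQ J I LinearMap.id hJI) : ModuleCat.of R (R ⧸ J) ⟶ ModuleCat.of R (R ⧸ I)).op).app M).hom x = 0 → IsMult (φ ∘ₗ Submodule.inclusion hJI) := by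
  let Q := projectiveResolution (ModuleCat.of R (R ⧸ I))
  obtain ⟨β, hβ⟩ := Module.projective_lifting_property (Submodule.mkQ I) (resE Q) (Submodule.mkQ_surjective I)
  have hβ' : ∀ p, Ideal.Quotient.mk I (β p) = resE Q p := fun p => congrArg (fun l => l p) hβ
  have hmem : ∀ y, β ((Q.complex.d 1 0).hom y) ∈ I := fun y => by
    rw [← Ideal.Quotient.eq_zero_iff_mem, hβ', resE_exact]; exact ⟨y, rfl⟩
  let z : Q.complex.X 1 →ₗ[R] M := φ ∘ₗ (β ∘ₗ (Q.complex.d 1 0).hom).codRestrict I hmem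
  obtain ⟨x, hx⟩ := class_exists (K := Q.complex.linearYonedaObj R M) (ModuleCat.ofHom z : Q.complex.X 1 ⟶ M) (by
    change Q.complex.d 2 1 ≫ ModuleCat.ofHom z = 0
    ext y
    change φ _ = 0
    convert map_zero φ
    ext
    change β ((Q.complex.d 1 0).hom ((Q.complex.d 2 1).hom y)) = 0
    rw [(res_exact1 Q _).2 ⟨y, rfl⟩, map_zero])
  refine ⟨(Q.isoExt 1 M).inv.hom x, fun J hJI h => ?_⟩
  let P := projectiveResolution (ModuleCat.of R (R ⧸ J))
  set p : ModuleCat.of R (R ⧸ J) ⟶ ModuleCat.of R (R ⧸ I) := ModuleCat.ofHom (Submodule.mapQ J I LinearMap.id hJI) with hp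
  let ψ := ProjectiveResolution.lift p P Q
  have hn := ex_nat p P Q ψ (ProjectiveResolution.lift_commutes_zero p P Q) M 1
  have h0 : (HomologicalComplex.homologyMap (exMap ψ M) 1).hom x = 0 := by
    have := congrArg (fun l => l.hom ((Q.isoExt 1 M).inv.hom x)) hn
    simp only [ModuleCat.hom_comp, LinearMap.comp_apply] at this
    rw [h, map_zero] at this
    have e := congrArg (fun l => l.hom x) (Q.isoExt (R := R) 1 M).inv_hom_id
    simp only [ModuleCat.hom_comp, LinearMap.comp_apply] at e
    rw [e] at this
    exact this.symm
  obtain ⟨w, hw⟩ := hx _ _ h0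
  change P.complex.X 0 ⟶ M at w
  replace hw : P.complex.d 1 0 ≫ w = ψ.f 1 ≫ ModuleCat.ofHom z := hw
  exact alg_c I J hJI (P.complex.d 1 0).hom (resE P) (resE_surj P) (resE_exact P)
    (Q.complex.d 1 0).hom (resE Q) (ψ.f 1).hom (ψ.f 0).hom
    (fun y => congrArg (fun l => l.hom y) (ψ.comm 1 0))
    (fun y => congrArg (fun l => l.hom y) (ProjectiveResolution.lift_commutes_zero p P Q))
    β hβ' φ z (fun y => ⟨hmem y, rfl⟩) w.hom (fun y => congrArg (fun l => l.hom y) hw)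


lemma nontriv_iff (M : ModuleCat.{u} R) : ¬ Nontrivial M ↔ IsZero M := by
  rw [not_nontrivial_iff_subsingleton, ModuleCat.isZero_iff_subsingleton]

def lcIso (I : Ideal R) (i : ℕ) (M : ModuleCat.{u} R) :
    (localCohomology I i).obj M ≅ colimit ((localCohomology.diagram (localCohomology.idealPowersDiagram I) i).flip.obj M) :=
  colimitObjIsoColimitCompEvaluation _ _

lemma lc_zero (I : Ideal R) (i : ℕ) (M : ModuleCat.{u} R)
    (H : ∀ s, IsZero (((Ext R (ModuleCat.{u} R) i).obj (op (ModuleCat.of R (R ⧸ I ^ s)))).obj M)) :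
    ¬ Nontrivial ((localCohomology I i).obj M) := by
  rw [nontriv_iff]
  refine IsZero.of_iso ?_ (lcIso I i M)
  rw [IsZero.iff_id_eq_zero]
  refine colimit.hom_ext fun j => ?_
  exact IsZero.eq_of_src (H (unop (unop j))) _ _

lemma lc0_zero (I : Ideal R) (M : ModuleCat.{u} R)
    (H : ∀ s, ∀ x : M, (∀ b ∈ I ^ s, b • x = 0) → x = 0) :
    ¬ Nontrivial ((localCohomology I 0).obj M) :=
  lc_zero _ _ _ fun s => ext_zero_zero _ _ (H s)

lemma lc1_nontriv_exists (I : Ideal R) (M : ModuleCat.{u} R)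
    (H : Nontrivial ((localCohomology I 1).obj M)) :
    ∃ (s : ℕ) (φ : (I ^ s : Ideal R) →ₗ[R] M), ¬ IsMult φ := by
  by_contra! hc
  exact lc_zero _ _ _ (fun s => ext_one_zero _ _ (hc s)) H

lemma lc1_nontriv_of {R : Type} [CommRing R] (I : Ideal R) (M : ModuleCat.{0} R) (s : ℕ) (φ : (I ^ s : Ideal R) →ₗ[R] M)
    (hφ : ∀ s' (hs : I ^ s' ≤ I ^ s), ¬ IsMult (φ ∘ₗ Submodule.inclusion hs)) :
    Nontrivial ((localCohomology I 1).obj M) := by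
  by_contra hc
  rw [nontriv_iff] at hc
  replace hc := hc.of_iso (lcIso I 1 M).symm
  obtain ⟨x, hx⟩ := ext_one_elt (I ^ s) M φ
  obtain ⟨j, f, hf⟩ := Concrete.colimit_rep_eq_zero R ((localCohomology.diagram (localCohomology.idealPowersDiagram I) 1).flip.obj M) (op (op s)) x (by
    have := ModuleCat.isZero_iff_subsingleton.1 hc
    exact Subsingleton.elim _ _)
  exact hφ (unop (unop j)) (Ideal.pow_le_pow_right f.unop.unop.down.down) (hx _ _ hf)

end LC

section Comb
variable {k : Type} [Field k] {n : ℕ} {Γ : SimpleGraph (Fin n)}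

/-- The degree of an exponent vector outside `F`. -/
def wt (F : Finset (Fin n)) (a : Fin n →₀ ℕ) : ℕ := ∑ i ∈ Fᶜ, a i

lemma wt_add (F : Finset (Fin n)) (a b : Fin n →₀ ℕ) : wt F (a + b) = wt F a + wt F b := by
  simp [wt, Finset.sum_add_distrib]

lemma wt_single_mem {F : Finset (Fin n)} {v : Fin n} (h : v ∈ F) (s : ℕ) :
    wt F (Finsupp.single v s) = 0 := by
  refine Finset.sum_eq_zero fun i hi => ?_
  rw [Finset.mem_compl] at hi
  exact Finsupp.single_eq_of_ne (fun e => hi (e ▸ h))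

lemma wt_single_notMem {F : Finset (Fin n)} {v : Fin n} (h : v ∉ F) (s : ℕ) :
    wt F (Finsupp.single v s) = s := by
  unfold wt
  rw [Finset.sum_eq_single v]
  · simp
  · intro b _ hb; exact Finsupp.single_eq_of_ne hb
  · intro h'; simp [h] at h'

/-- The ideal of polynomials all of whose terms have weight at least `t`. -/
def wtIdeal (k : Type) [Field k] {n : ℕ} (F : Finset (Fin n)) (t : ℕ) :
    Ideal (MvPolynomial (Fin n) k) where
  carrier := {f | ∀ a, wt F a < t → coeff a f = 0}
  add_mem' := by
    intro f g hf hg a ha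
    rw [coeff_add, hf a ha, hg a ha, add_zero]
  zero_mem' := by intro a _; simp
  smul_mem' := by
    intro c f hf a ha
    rw [smul_eq_mul, coeff_mul]
    refine Finset.sum_eq_zero fun p hp => ?_
    rw [Finset.HasAntidiagonal.mem_antidiagonal] at hp
    rw [hf p.2 (by rw [← hp, wt_add] at ha; omega), mul_zero]

lemma mem_wtIdeal {F : Finset (Fin n)} {t : ℕ} {f : MvPolynomial (Fin n) k} :
    f ∈ wtIdeal k F t ↔ ∀ a, wt F a < t → coeff a f = 0 := Iff.rfl

lemma wtIdeal_mul_le (F : Finset (Fin n)) (s t : ℕ) :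
    wtIdeal k F s * wtIdeal k F t ≤ wtIdeal k F (s + t) := by
  rw [Ideal.mul_le]
  intro f hf g hg a ha
  rw [coeff_mul]
  refine Finset.sum_eq_zero fun p hp => ?_
  rw [Finset.HasAntidiagonal.mem_antidiagonal] at hp
  rw [← hp, wt_add] at ha
  by_cases h : wt F p.1 < s
  · rw [hf _ h, zero_mul]
  · rw [hg _ (by omega), mul_zero]

lemma PF_le (F : Finset (Fin n)) : PF k F ≤ wtIdeal k F 1 := by
  unfold PF
  rw [Ideal.span_le]
  rintro _ ⟨i, hi, rfl⟩ a ha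
  rw [coeff_X, if_neg]
  rintro rfl
  rw [wt_single_notMem hi] at ha
  omega

lemma PF_pow_le (F : Finset (Fin n)) (t : ℕ) : PF k F ^ t ≤ wtIdeal k F t := by
  induction t with
  | zero => intro f _ a ha; omega
  | succ t ih =>
    rw [pow_succ]
    exact (Ideal.mul_mono ih (PF_le F)).trans (wtIdeal_mul_le F t 1)

lemma monomial_mem_PF (F : Finset (Fin n)) (t : ℕ) (a : Fin n →₀ ℕ) (c : k) (h : t ≤ wt F a) :
    monomial a c ∈ PF k F ^ t := by
  refine Ideal.pow_le_pow_right h ?_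
  rw [monomial_eq, Finsupp.prod_fintype _ _ (by simp), ← Finset.prod_compl_mul_prod F]
  refine Ideal.mul_mem_left _ _ (Ideal.mul_mem_right _ _ ?_)
  unfold wt
  rw [← Finset.prod_pow_eq_pow_sum]
  refine Ideal.prod_mem_prod fun i hi => Ideal.pow_mem_pow (Ideal.subset_span ?_) _
  exact ⟨i, by simpa using hi, rfl⟩

lemma mem_PF_pow {F : Finset (Fin n)} {t : ℕ} {f : MvPolynomial (Fin n) k} :
    f ∈ PF k F ^ t ↔ ∀ a, wt F a < t → coeff a f = 0 := by
  constructor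
  · intro h; exact PF_pow_le F t h
  · intro h
    rw [f.as_sum]
    refine Ideal.sum_mem _ fun a ha => monomial_mem_PF F t a _ ?_
    by_contra hc
    exact (mem_support_iff.1 ha) (h a (by omega))

lemma mem_symb {t : ℕ} {f : MvPolynomial (Fin n) k} :
    f ∈ symbPow k Γ t ↔ ∀ F, IsMaxIndep Γ F → f ∈ PF k F ^ t := by
  simp [symbPow, Submodule.mem_iInf]

lemma coeff_Xpow_mul (v : Fin n) (s : ℕ) (a : Fin n →₀ ℕ) (f : MvPolynomial (Fin n) k) :
    coeff (a + Finsupp.single v s) (X v ^ s * f) = coeff a f := by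
  rw [X_pow_eq_monomial, add_comm, coeff_monomial_mul, one_mul]

lemma coeff_Xpow_mul_zero (v : Fin n) (s : ℕ) (a : Fin n →₀ ℕ) (f : MvPolynomial (Fin n) k)
    (h : a v < s) : coeff a (X v ^ s * f) = 0 := by
  rw [X_pow_eq_monomial, coeff_monomial_mul', if_neg]
  intro hle
  have := hle v
  simp at this
  omega

lemma PF_pow_cancel {F : Finset (Fin n)} {t : ℕ} {f : MvPolynomial (Fin n) k} {v : Fin n}
    (hv : v ∈ F) (s : ℕ) (h : X v ^ s * f ∈ PF k F ^ t) : f ∈ PF k F ^ t := by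
  rw [mem_PF_pow] at h ⊢
  intro a ha
  rw [← coeff_Xpow_mul v s]
  refine h _ ?_
  rw [wt_add, wt_single_mem hv]; exact ha

lemma maxIndep_extend (F : Finset (Fin n)) (h : IsIndep Γ F) :
    ∃ G, IsMaxIndep Γ G ∧ F ⊆ G := by
  obtain ⟨G, hFG, hG⟩ := (Set.toFinite {G : Finset (Fin n) | IsIndep Γ G}).exists_le_maximal h
  exact ⟨G, ⟨hG.prop, fun H hH hGH => (hG.eq_of_le hH hGH).symm⟩, hFG⟩

lemma indep_singleton (v : Fin n) : IsIndep Γ {v} := by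
  intro i hi j hj
  simp only [Finset.mem_singleton] at hi hj
  subst hi; subst hj
  exact Γ.loopless.irrefl _

lemma maxIndep_nonempty (hn : Nonempty (Fin n)) {F : Finset (Fin n)} (h : IsMaxIndep Γ F) :
    F.Nonempty := by
  rw [Finset.nonempty_iff_ne_empty]
  rintro rfl
  obtain ⟨v⟩ := hn
  have := h.2 {v} (indep_singleton v) (by simp)
  simp at this

lemma maxIndep_dominates {F : Finset (Fin n)} (h : IsMaxIndep Γ F) {j : Fin n} (hj : j ∉ F) :
    ∃ i ∈ F, Γ.Adj i j := by
  by_contra! hc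
  have : IsIndep Γ (insert j F) := by
    intro a ha b hb hab
    rw [Finset.mem_insert] at ha hb
    rcases ha with rfl | ha <;> rcases hb with rfl | hb
    · exact hab.ne rfl
    · exact hc _ hb hab.symm
    · exact hc _ ha hab
    · exact h.1 _ ha _ hb hab
  have := h.2 _ this (Finset.subset_insert _ _)
  exact hj (this ▸ Finset.mem_insert_self _ _)

/-- Some degree complex of the `t`-th symbolic power is disconnected. -/
def Disc (Γ : SimpleGraph (Fin n)) (t : ℕ) : Prop :=
  ∃ (a : Fin n →₀ ℕ) (S : Set (Fin n)),
    (∀ F, IsMaxIndep Γ F → wt F a < t → (∀ v ∈ F, v ∈ S) ∨ (∀ v ∈ F, v ∉ S)) ∧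
    (∃ F, IsMaxIndep Γ F ∧ wt F a < t ∧ ∀ v ∈ F, v ∈ S) ∧
    (∃ F, IsMaxIndep Γ F ∧ wt F a < t ∧ ∀ v ∈ F, v ∉ S)

lemma disc_succ (hn : Nonempty (Fin n)) {t : ℕ} (h : Disc Γ t) : Disc Γ (t + 1) := by
  obtain ⟨a, S, hS, ⟨F1, h1, w1, s1⟩, ⟨F2, h2, w2, s2⟩⟩ := h
  obtain ⟨j, hj⟩ := maxIndep_nonempty hn h2
  obtain ⟨i, hi, hij⟩ := maxIndep_dominates h1 (fun hj1 => s2 j hj (s1 j hj1))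
  have hj1 : j ∉ F1 := fun hj1 => s2 j hj (s1 j hj1)
  have hi2 : i ∉ F2 := fun hi2 => s2 i hi2 (s1 i hi)
  refine ⟨a + Finsupp.single i 1 + Finsupp.single j 1, S, ?_, ⟨F1, h1, ?_, s1⟩, ⟨F2, h2, ?_, s2⟩⟩
  · intro F hF hw
    refine hS F hF ?_
    rw [wt_add, wt_add] at hw
    by_cases hiF : i ∈ F
    · have hjF : j ∉ F := fun hjF => hF.1 _ hiF _ hjF hij
      rw [wt_single_notMem hjF] at hw; omega
    · rw [wt_single_notMem hiF] at hw; omega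
  · rw [wt_add, wt_add, wt_single_mem hi, wt_single_notMem hj1]; omega
  · rw [wt_add, wt_add, wt_single_mem hj, wt_single_notMem hi2]; omega

lemma symb_torsion (hn : Nonempty (Fin n)) {t s : ℕ} {f : MvPolynomial (Fin n) k}
    (h : ∀ v, X v ^ s * f ∈ symbPow k Γ t) : f ∈ symbPow k Γ t := by
  rw [mem_symb]
  intro F hF
  obtain ⟨v, hv⟩ := maxIndep_nonempty hn hF
  exact PF_pow_cancel hv s (mem_symb.1 (h v) F hF)

lemma X_pow_mem (v : Fin n) (s : ℕ) : (X v ^ s : MvPolynomial (Fin n) k) ∈ maxIdeal k (Fin n) ^ s := by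
  refine Ideal.pow_mem_pow ?_ _
  unfold maxIdeal
  exact Ideal.subset_span ⟨v, rfl⟩

lemma X_pow_mem_PF {v : Fin n} {F : Finset (Fin n)} (hv : v ∉ F) (s : ℕ) :
    (X v ^ s : MvPolynomial (Fin n) k) ∈ PF k F ^ s := by
  refine Ideal.pow_mem_pow ?_ _
  unfold PF
  exact Ideal.subset_span ⟨v, hv, rfl⟩

/-- The ideal generated by the `t`-th powers of the variables in `S`. -/
def powId (k : Type) [Field k] {n : ℕ} (S : Set (Fin n)) (t : ℕ) : Ideal (MvPolynomial (Fin n) k) :=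
  Ideal.span ((fun v => X v ^ t) '' S)

lemma powId_le {S : Set (Fin n)} {F : Finset (Fin n)} (h : ∀ v ∈ F, v ∉ S) (t : ℕ) :
    powId k S t ≤ PF k F ^ t := by
  rw [powId, Ideal.span_le]
  rintro _ ⟨v, hv, rfl⟩
  exact X_pow_mem_PF (fun hF => h v hF hv) t

lemma exists_pow_le (S : Set (Fin n)) (t : ℕ) :
    ∃ N, maxIdeal k (Fin n) ^ N ≤ powId k S t ⊔ powId k Sᶜ t := by
  refine Ideal.exists_pow_le_of_le_radical_of_fg ?_ ?_
  · rw [maxIdeal, Ideal.span_le]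
    rintro _ ⟨v, rfl⟩
    refine ⟨t, ?_⟩
    by_cases hv : v ∈ S
    · exact Ideal.mem_sup_left (Ideal.subset_span ⟨v, hv, rfl⟩)
    · exact Ideal.mem_sup_right (Ideal.subset_span ⟨v, hv, rfl⟩)
  · exact ⟨(Set.finite_range X).toFinset, by simp [maxIdeal]⟩

lemma exists_hom_of_disc (hn : Nonempty (Fin n)) {t : ℕ} (h : Disc Γ t) :
    ∃ (s : ℕ) (φ : (maxIdeal k (Fin n) ^ s : Ideal (MvPolynomial (Fin n) k)) →ₗ[MvPolynomial (Fin n) k]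
        (MvPolynomial (Fin n) k ⧸ symbPow k Γ t)),
      ∀ s' (hs : maxIdeal k (Fin n) ^ s' ≤ maxIdeal k (Fin n) ^ s),
        ¬ IsMult (φ ∘ₗ Submodule.inclusion hs) := by
  obtain ⟨a, S, hS, ⟨F1, h1, w1, s1⟩, ⟨F2, h2, w2, s2⟩⟩ := h
  obtain ⟨N, hN⟩ := exists_pow_le (k := k) S t
  set U := powId k S t with hU
  set W := powId k Sᶜ t with hW
  set J := symbPow k Γ t with hJ
  let xa : MvPolynomial (Fin n) k := monomial a 1
  have key : ∀ u ∈ U, u ∈ W → xa * u ∈ J := by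
    intro u hu hw
    rw [hJ, mem_symb]
    intro F hF
    by_cases hwt : wt F a < t
    · refine Ideal.mul_mem_left _ _ ?_
      rcases hS F hF hwt with h | h
      · exact powId_le (S := Sᶜ) (fun v hv hc => hc (h v hv)) t hw
      · exact powId_le h t hu
    · exact Ideal.mul_mem_right _ _ (monomial_mem_PF F t a 1 (by omega))
  let q : (U × W) →ₗ[MvPolynomial (Fin n) k] (U ⊔ W : Ideal _) :=
    (Submodule.inclusion le_sup_left).coprod (Submodule.inclusion le_sup_right)
  have hq : ∀ p : U × W, (q p : MvPolynomial (Fin n) k) = p.1 + p.2 := fun p => rfl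
  have hqs : Function.Surjective q := by
    rintro ⟨x, hx⟩
    obtain ⟨u, hu, w, hw, rfl⟩ := Submodule.mem_sup.1 hx
    exact ⟨(⟨u, hu⟩, ⟨w, hw⟩), rfl⟩
  let z : (U × W) →ₗ[MvPolynomial (Fin n) k] (MvPolynomial (Fin n) k ⧸ J) :=
    (Submodule.mkQ J) ∘ₗ (LinearMap.mulLeft _ xa) ∘ₗ U.subtype ∘ₗ LinearMap.fst _ U W
  have hz : ∀ p : U × W, z p = Ideal.Quotient.mk J (xa * p.1) := fun p => rfl
  obtain ⟨f, hf⟩ := factor_surj q hqs z (by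
    intro p hp
    rw [hz, Ideal.Quotient.eq_zero_iff_mem]
    refine key _ p.1.2 ?_
    have := congrArg Subtype.val hp
    rw [hq] at this
    have e : (p.1 : MvPolynomial (Fin n) k) = - p.2 := eq_neg_of_add_eq_zero_left this
    rw [e]
    exact W.neg_mem p.2.2)
  have hfU : ∀ u (hu : u ∈ U) (hu' : u ∈ U ⊔ W), f ⟨u, hu'⟩ = Ideal.Quotient.mk J (xa * u) := by
    intro u hu hu'
    rw [← hz (⟨u, hu⟩, 0), ← hf]
    congr 1
    ext1
    rw [hq]; simp
  have hfW : ∀ u (hu : u ∈ W) (hu' : u ∈ U ⊔ W), f ⟨u, hu'⟩ = 0 := by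
    intro u hu hu'
    have : z (0, ⟨u, hu⟩) = 0 := by rw [hz]; simp
    rw [← this, ← hf]
    congr 1
    ext1
    rw [hq]; simp
  refine ⟨N, f ∘ₗ Submodule.inclusion hN, ?_⟩
  rintro s' hs ⟨g, hg⟩
  obtain ⟨g, rfl⟩ := Ideal.Quotient.mk_surjective g
  have hmem : ∀ v, (X v ^ (s' + t) : MvPolynomial (Fin n) k) ∈ maxIdeal k (Fin n) ^ s' := fun v =>
    Ideal.pow_le_pow_right (Nat.le_add_right _ _) (X_pow_mem v _)
  have hg' : ∀ v, f ⟨X v ^ (s' + t), hN (hs (hmem v))⟩ = Ideal.Quotient.mk J (X v ^ (s' + t) * g) :=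
    fun v => hg ⟨_, hmem v⟩
  obtain ⟨v1, hv1⟩ := maxIndep_nonempty hn h1
  obtain ⟨v2, hv2⟩ := maxIndep_nonempty hn h2
  have e1 : coeff a (xa - g) = 0 := by
    have := hg' v1
    rw [hfU _ (by
      rw [pow_add]
      exact Ideal.mul_mem_left _ _ (Ideal.subset_span ⟨v1, s1 _ hv1, rfl⟩)), Ideal.Quotient.eq,
      mul_comm xa, ← mul_sub] at this
    exact mem_PF_pow.1 (PF_pow_cancel hv1 _ (mem_symb.1 this F1 h1)) a w1
  have e2 : coeff a g = 0 := by
    have := hg' v2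
    rw [hfW _ (by
      rw [pow_add]
      exact Ideal.mul_mem_left _ _ (Ideal.subset_span ⟨v2, s2 _ hv2, rfl⟩)), eq_comm,
      Ideal.Quotient.eq_zero_iff_mem] at this
    exact mem_PF_pow.1 (PF_pow_cancel hv2 _ (mem_symb.1 this F2 h2)) a w2
  rw [coeff_sub, e2, sub_zero] at e1
  simp [xa] at e1

lemma disc_of_singleton (hiso : NoIsolated Γ) {t : ℕ} (ht : 1 ≤ t) (v : Fin n)
    (h : IsMaxIndep Γ {v}) : Disc Γ t := by
  have w0 : ∀ F : Finset (Fin n), wt F 0 < t := fun F => by simp [wt]; omega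
  obtain ⟨u, hu⟩ := hiso v
  obtain ⟨G, hG, huG⟩ := maxIndep_extend (Γ := Γ) {u} (indep_singleton u)
  refine ⟨0, {v}, ?_, ⟨{v}, h, w0 _, by simp⟩, ⟨G, hG, w0 _, ?_⟩⟩
  · intro F hF _
    by_cases hv : v ∈ F
    · left
      have := h.2 F hF.1 (by simpa using hv)
      rw [this]; simp
    · right
      rintro x hx rfl
      exact hv hx
  · rintro x hx rfl
    exact hG.1 _ hx _ (huG (by simp)) hu

lemma exists_glue (t s : ℕ) (hd : ¬ Disc Γ t) (g : Fin n → MvPolynomial (Fin n) k)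
    (hg : ∀ v w, X w ^ s * g v - X v ^ s * g w ∈ symbPow k Γ t) :
    ∃ G : MvPolynomial (Fin n) k, ∀ a F v, IsMaxIndep Γ F → wt F a < t → v ∈ F →
      coeff a G = coeff (a + Finsupp.single v s) (g v) := by
  classical
  let V : (Fin n →₀ ℕ) → Fin n → Prop := fun a v => ∃ F, IsMaxIndep Γ F ∧ wt F a < t ∧ v ∈ F
  let c : (Fin n →₀ ℕ) → Fin n → k := fun a v => coeff (a + Finsupp.single v s) (g v)
  have hloc : ∀ a F, IsMaxIndep Γ F → wt F a < t → ∀ v ∈ F, ∀ w ∈ F, c a v = c a w := by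
    intro a F hF hw v hv w hw'
    have := mem_PF_pow.1 (mem_symb.1 (hg v w) F hF)
      (a + Finsupp.single v s + Finsupp.single w s) (by
        rw [wt_add, wt_add, wt_single_mem hv, wt_single_mem hw']; exact hw)
    rw [coeff_sub, coeff_Xpow_mul, add_right_comm, coeff_Xpow_mul, sub_eq_zero] at this
    exact this
  have hglob : ∀ a v w, V a v → V a w → c a v = c a w := by
    rintro a v w ⟨F, hF, hFa, hv⟩ ⟨F', hF', hFa', hw⟩
    by_contra hne
    refine hd ⟨a, {x | c a x = c a v}, ?_, ⟨F, hF, hFa, ?_⟩, ⟨F', hF', hFa', ?_⟩⟩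
    · intro H hH hHa
      by_cases hex : ∃ x ∈ H, c a x = c a v
      · obtain ⟨x, hx, hxv⟩ := hex
        left
        intro y hy
        exact (hloc a H hH hHa y hy x hx).trans hxv
      · right
        intro y hy hyv
        exact hex ⟨y, hy, hyv⟩
    · intro x hx
      exact hloc a F hF hFa x hx v hv
    · intro x hx hxv
      exact hne (hxv.symm.trans (hloc a F' hF' hFa' x hx w hw))
  let γ : (Fin n →₀ ℕ) → k := fun a => if h : ∃ v, V a v then c a h.choose else 0
  have hγ : ∀ a v, V a v → γ a = c a v := by
    intro a v hv
    have h : ∃ v, V a v := ⟨v, hv⟩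
    simp only [γ, dif_pos h]
    exact hglob _ _ _ h.choose_spec hv
  let T : Finset (Fin n →₀ ℕ) := Finset.univ.biUnion fun v =>
    (g v).support.image (fun b => b - Finsupp.single v s)
  have hT : ∀ a, γ a ≠ 0 → a ∈ T := by
    intro a ha
    by_cases h : ∃ v, V a v
    · obtain ⟨v, hv⟩ := h
      rw [hγ a v hv] at ha
      simp only [T, Finset.mem_biUnion, Finset.mem_univ, true_and, Finset.mem_image]
      exact ⟨v, _, mem_support_iff.2 ha, by simp⟩
    · simp [γ, h] at ha
  refine ⟨∑ a ∈ T, monomial a (γ a), fun a F v hF hFa hv => ?_⟩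
  rw [coeff_sum]
  simp only [coeff_monomial]
  rw [Finset.sum_ite_eq' T a]
  rw [show coeff (a + Finsupp.single v s) (g v) = γ a from (hγ a v ⟨F, hF, hFa, hv⟩).symm]
  split_ifs with h
  · rfl
  · by_contra hne
    exact h (hT a (Ne.symm hne))

lemma disc_of_hom (hn : Nonempty (Fin n)) (hiso : NoIsolated Γ) {t : ℕ} (ht : 1 ≤ t) (s : ℕ)
    (φ : (maxIdeal k (Fin n) ^ s : Ideal (MvPolynomial (Fin n) k)) →ₗ[MvPolynomial (Fin n) k]
        (MvPolynomial (Fin n) k ⧸ symbPow k Γ t)) (hφ : ¬ IsMult φ) : Disc Γ t := by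
  by_contra hd
  apply hφ
  clear hφ
  let J := symbPow k Γ t
  have hJ : J = symbPow k Γ t := rfl
  have hmem : ∀ v, (X v ^ (s + t) : MvPolynomial (Fin n) k) ∈ maxIdeal k (Fin n) ^ s := fun v =>
    Ideal.pow_le_pow_right (Nat.le_add_right _ _) (X_pow_mem v _)
  choose g hg using fun v => Ideal.Quotient.mk_surjective (φ ⟨_, hmem v⟩)
  have hcomm : ∀ (b b' : (maxIdeal k (Fin n) ^ s : Ideal (MvPolynomial (Fin n) k))),
      (b : MvPolynomial (Fin n) k) • φ b' = (b' : MvPolynomial (Fin n) k) • φ b := by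
    intro b b'
    rw [← map_smul, ← map_smul]
    congr 1
    ext1
    simp [mul_comm]
  have hgg : ∀ v w, X w ^ (s + t) * g v - X v ^ (s + t) * g w ∈ J := by
    intro v w
    rw [← Ideal.Quotient.eq, map_mul, map_mul, hg, hg]
    exact hcomm ⟨_, hmem w⟩ ⟨_, hmem v⟩
  obtain ⟨G, hG⟩ := exists_glue t (s + t) hd g hgg
  have h2 : ∀ F, IsMaxIndep Γ F → ∀ v, ∃ w ∈ F, w ≠ v := by
    intro F hF v
    by_contra! hc
    obtain ⟨x, hx⟩ := maxIndep_nonempty hn hF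
    have : F = {v} := by
      ext y
      rw [Finset.mem_singleton]
      exact ⟨hc y, fun e => by rw [e, ← hc x hx]; exact hx⟩
    exact hd (disc_of_singleton hiso ht v (this ▸ hF))
  have hGg : ∀ v, X v ^ (s + t) * G - g v ∈ J := by
    intro v
    rw [hJ, mem_symb]
    intro F hF
    rw [mem_PF_pow]
    intro b hb
    rw [coeff_sub]
    by_cases hbv : s + t ≤ b v
    · obtain ⟨a, rfl⟩ : ∃ a, b = a + Finsupp.single v (s + t) :=
        ⟨b - Finsupp.single v (s + t), by
          rw [tsub_add_cancel_of_le (Finsupp.single_le_iff.2 hbv)]⟩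
      rw [wt_add] at hb
      have hv : v ∈ F := by
        by_contra hv
        rw [wt_single_notMem hv] at hb; omega
      rw [coeff_Xpow_mul, hG a F v hF (by omega) hv, sub_self]
    · rw [coeff_Xpow_mul_zero _ _ _ _ (by omega), zero_sub, neg_eq_zero]
      obtain ⟨w, hw, hwv⟩ := h2 F hF v
      have := mem_PF_pow.1 (mem_symb.1 (hgg v w) F hF) (b + Finsupp.single w (s + t)) (by
        rw [wt_add, wt_single_mem hw]; exact hb)
      rw [coeff_sub, coeff_Xpow_mul, coeff_Xpow_mul_zero, sub_zero] at this
      · exact this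
      · rw [Finsupp.add_apply, Finsupp.single_eq_of_ne hwv.symm]; omega
  refine ⟨Ideal.Quotient.mk J G, fun b => ?_⟩
  obtain ⟨f, hf⟩ := Ideal.Quotient.mk_surjective (φ b)
  rw [← hf]
  change Ideal.Quotient.mk J f = Ideal.Quotient.mk J (b * G)
  rw [Ideal.Quotient.eq]
  refine symb_torsion hn (s := s + t) fun v => ?_
  rw [mul_sub, ← hJ, ← Ideal.Quotient.eq, map_mul, hf]
  have e1 : Ideal.Quotient.mk J (X v ^ (s + t)) * φ b = Ideal.Quotient.mk J b * φ ⟨_, hmem v⟩ :=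
    hcomm ⟨_, hmem v⟩ b
  have e2 := (Ideal.Quotient.eq).2 (hGg v)
  rw [e1, ← hg, ← e2]
  simp only [map_mul]
  ring

end Comb

/-- Let `Γ` be a connected graph. If `depth R/I^{(t)} = 1` for some
`t ≥ 1`, then `depth R/I^{(t+1)} = 1`. -/
theorem stmt13 (k : Type) [Field k] (n : ℕ) (Γ : SimpleGraph (Fin n))
    (hiso : NoIsolated Γ) (hconn : Γ.Connected)
    (t : ℕ) (ht : 1 ≤ t) (h : rDepth k (symbPow k Γ t) = 1) :
    rDepth k (symbPow k Γ (t + 1)) = 1 := by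
  have hn : Nonempty (Fin n) := hconn.nonempty
  unfold rDepth at h ⊢
  have hne : {i | Nontrivial (locCoh k (symbPow k Γ t) i)}.Nonempty :=
    Nat.nonempty_of_pos_sInf (by omega)
  have hm := Nat.sInf_mem hne
  rw [h] at hm
  obtain ⟨s, φ, hφ⟩ := lc1_nontriv_exists _ _ hm
  obtain ⟨s', ψ, hψ⟩ := exists_hom_of_disc (k := k) hn (disc_succ hn (disc_of_hom hn hiso ht s φ hφ))
  have h1 : (1 : ℕ) ∈ {i | Nontrivial (locCoh k (symbPow k Γ (t + 1)) i)} :=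
    lc1_nontriv_of _ (ModuleCat.of _ (MvPolynomial (Fin n) k ⧸ symbPow k Γ (t + 1))) s' ψ hψ
  have h0 : (0 : ℕ) ∉ {i | Nontrivial (locCoh k (symbPow k Γ (t + 1)) i)} := by
    refine lc0_zero _ (ModuleCat.of _ (MvPolynomial (Fin n) k ⧸ symbPow k Γ (t + 1))) ?_
    intro r x hx
    obtain ⟨f, rfl⟩ := Ideal.Quotient.mk_surjective (x : MvPolynomial (Fin n) k ⧸ symbPow k Γ (t + 1))
    refine Ideal.Quotient.eq_zero_iff_mem.2 (symb_torsion hn (s := r) fun v => ?_)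
    exact Ideal.Quotient.eq_zero_iff_mem.1 (hx _ (X_pow_mem v r))
  have hle := Nat.sInf_le h1
  rcases Nat.eq_zero_or_pos (sInf {i | Nontrivial (locCoh k (symbPow k Γ (t + 1)) i)}) with h' | h'
  · rcases Nat.sInf_eq_zero.1 h' with h'' | h''
    · exact absurd h'' h0
    · rw [h''] at h1
      exact absurd h1 (Set.notMem_empty _)
  · omega

end
end

section
/- depth R/I = 1 if and only if there is a partition V = A ⊔ B of the vertex set into two nonempty sets such that every vertex of A is adjacent in Γ to every vertex of B. -/
open MvPolynomial

noncomputable section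

open CategoryTheory Opposite Limits

section HomPart

variable {R : Type} [CommRing R] {X : ModuleCat.{0} R}

abbrev yF (M : ModuleCat.{0} R) : ModuleCat.{0} R ⥤ (ModuleCat.{0} R)ᵒᵖ :=
  ((linearYoneda R (ModuleCat.{0} R)).obj M).rightOp

abbrev KC (P : ProjectiveResolution X) (M : ModuleCat.{0} R) :
    ChainComplex (ModuleCat.{0} R)ᵒᵖ ℕ :=
  ((yF M).mapHomologicalComplex _).obj P.complex

def extIso (P : ProjectiveResolution X) (M : ModuleCat.{0} R) (n : ℕ) :
    ((KC P M).homology n).unop ≅ ((Ext R (ModuleCat.{0} R) n).obj (op X)).obj M :=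
  (P.isoLeftDerivedObj (yF M) n).unop

def clsMap (P : ProjectiveResolution X) (M : ModuleCat.{0} R) (n : ℕ) :
    ((KC P M).opcycles n).unop ⟶ ((Ext R (ModuleCat.{0} R) n).obj (op X)).obj M :=
  ((KC P M).homologyι n).unop ≫ (extIso P M n).hom

def pMap (P : ProjectiveResolution X) (M : ModuleCat.{0} R) (n : ℕ) :
    ((KC P M).opcycles n).unop ⟶ ModuleCat.of R (P.complex.X n ⟶ M) :=
  ((KC P M).pOpcycles n).unop

def ExtRep (P : ProjectiveResolution X) (M : ModuleCat.{0} R) (n : ℕ) (φ : P.complex.X n ⟶ M)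
    (e : ((Ext R (ModuleCat.{0} R) n).obj (op X)).obj M) : Prop :=
  ∃ z, pMap P M n z = φ ∧ clsMap P M n z = e

instance (P : ProjectiveResolution X) (M : ModuleCat.{0} R) (n : ℕ) : Mono (pMap P M n) := by
  exact unop_mono_of_epi ((KC P M).pOpcycles n)

instance (P : ProjectiveResolution X) (M : ModuleCat.{0} R) (n : ℕ) : Epi (clsMap P M n) := by
  
  unfold clsMap
  have := unop_epi_of_mono ((KC P M).homologyι n)
  exact epi_comp _ _

lemma pMap_inj (P : ProjectiveResolution X) (M : ModuleCat.{0} R) (n : ℕ) :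
    Function.Injective (pMap P M n) := (ModuleCat.mono_iff_injective _).1 inferInstance

lemma rep_zero {P : ProjectiveResolution X} {M : ModuleCat.{0} R} {n : ℕ}
    {e : ((Ext R (ModuleCat.{0} R) n).obj (op X)).obj M} (h : ExtRep P M n 0 e) : e = 0 := by
  obtain ⟨z, hz, rfl⟩ := h
  have : z = 0 := pMap_inj P M n (by rw [hz, map_zero])
  rw [this, map_zero]

lemma exists_rep (P : ProjectiveResolution X) {M : ModuleCat.{0} R} {n : ℕ}
    (e : ((Ext R (ModuleCat.{0} R) n).obj (op X)).obj M) :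
    ∃ φ, ExtRep P M n φ e ∧ P.complex.d (n+1) n ≫ φ = 0 := by
  obtain ⟨z, rfl⟩ := (ModuleCat.epi_iff_surjective (clsMap P M n)).1 inferInstance e
  refine ⟨_, ⟨z, rfl, rfl⟩, ?_⟩
  have h : pMap P M n ≫ ((KC P M).d (n+1) n).unop = 0 := by
    have := (KC P M).d_pOpcycles (n+1) n
    exact congrArg Quiver.Hom.unop this
  exact congrArg (fun f => f z) h

lemma rep_exists (P : ProjectiveResolution X) {M : ModuleCat.{0} R} {n : ℕ}
    (φ : P.complex.X n ⟶ M) (h : P.complex.d (n+1) n ≫ φ = 0) : ∃ e, ExtRep P M n φ e := by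
  have hex : (ShortComplex.mk _ _ ((KC P M).d_pOpcycles (n+1) n)).Exact :=
    ShortComplex.exact_of_g_is_cokernel _ ((KC P M).opcyclesIsCokernel (n+1) n (by simp))
  have h2 := (ShortComplex.moduleCat_exact_iff _).1 hex.unop φ h
  obtain ⟨z, hz⟩ := h2
  exact ⟨_, z, hz, rfl⟩

lemma rep_eq_zero_iff {P : ProjectiveResolution X} {M : ModuleCat.{0} R}
    {φ : P.complex.X 1 ⟶ M} {e} (h : ExtRep P M 1 φ e) :
    e = 0 ↔ ∃ ψ : P.complex.X 0 ⟶ M, P.complex.d 1 0 ≫ ψ = φ := by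
  obtain ⟨z, hz, rfl⟩ := h
  have hex : (ShortComplex.mk _ _ ((KC P M).homologyι_comp_fromOpcycles 1 0)).Exact :=
    ShortComplex.exact_of_f_is_kernel _ ((KC P M).homologyIsKernel 1 0 (by simp))
  have hp : ((KC P M).fromOpcycles 1 0).unop ≫ pMap P M 1 = ((KC P M).d 1 0).unop := 
    congrArg Quiver.Hom.unop ((KC P M).p_fromOpcycles 1 0)
  have hinj : Function.Injective (extIso P M 1).hom :=
    (ModuleCat.mono_iff_injective _).1 inferInstance
  constructor
  · intro h0
    have h1 : ((KC P M).homologyι 1).unop z = 0 := by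
      apply hinj
      rw [map_zero]; exact h0
    obtain ⟨ψ, hψ⟩ := (ShortComplex.moduleCat_exact_iff _).1 hex.unop z h1
    refine ⟨ψ, ?_⟩
    rw [← hz]
    have := congrArg (fun f => f ψ) hp
    refine Eq.trans this.symm ?_
    exact congrArg (pMap P M 1) hψ
  · rintro ⟨ψ, hψ⟩
    have : z = ((KC P M).fromOpcycles 1 0).unop ψ := by
      apply pMap_inj
      rw [hz, ← hψ]
      exact (congrArg (fun f => f ψ) hp).symm
    rw [this]
    have h3 : ((KC P M).fromOpcycles 1 0).unop ≫ clsMap P M 1 = 0 := by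
      have := congrArg Quiver.Hom.unop ((KC P M).homologyι_comp_fromOpcycles 1 0)
      unfold clsMap
      rw [← Category.assoc]
      refine (congrArg (· ≫ _) this).trans ?_
      exact zero_comp
    exact congrArg (fun f => f ψ) h3

lemma rep_map {X' : ModuleCat.{0} R} {P : ProjectiveResolution X} {Q : ProjectiveResolution X'}
    {M : ModuleCat.{0} R} {n : ℕ} (g : X' ⟶ X) (l : Q.complex ⟶ P.complex)
    (comm : l.f 0 ≫ P.π.f 0 = Q.π.f 0 ≫ g)
    {φ : P.complex.X n ⟶ M} {e} (h : ExtRep P M n φ e) :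
    ExtRep Q M n (l.f n ≫ φ) ((((Ext R (ModuleCat.{0} R) n).map g.op).app M) e) := by
  obtain ⟨z, hz, rfl⟩ := h
  let L : KC Q M ⟶ KC P M := ((yF M).mapHomologicalComplex _).map l
  refine ⟨(HomologicalComplex.opcyclesMap L n).unop z, ?_, ?_⟩
  · have := congrArg Quiver.Hom.unop (HomologicalComplex.p_opcyclesMap L n)
    refine (congrArg (fun f => f z) this).trans ?_
    rw [← hz]; rfl
  · have h1 := congrArg Quiver.Hom.unop (HomologicalComplex.homologyι_naturality L n)
    have h2 := congrArg Quiver.Hom.unop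
      (ProjectiveResolution.isoLeftDerivedObj_hom_naturality g Q P l comm (yF M) n)
    have h3 : (HomologicalComplex.opcyclesMap L n).unop ≫ clsMap Q M n
       = clsMap P M n ≫ ((Ext R (ModuleCat.{0} R) n).map g.op).app M := by
      unfold clsMap
      have h1' : (HomologicalComplex.opcyclesMap L n).unop ≫ ((KC Q M).homologyι n).unop
         = ((KC P M).homologyι n).unop ≫ (HomologicalComplex.homologyMap L n).unop := h1.symm
      have h2' : (HomologicalComplex.homologyMap L n).unop ≫ (extIso Q M n).hom
         = (extIso P M n).hom ≫
          ((Ext R (ModuleCat.{0} R) n).map g.op).app M := h2.symm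
      rw [← Category.assoc, h1', Category.assoc, h2', Category.assoc]
    exact congrArg (fun f => f z) h3

end HomPart

section Chase

variable {R : Type} [CommRing R] {X M N : ModuleCat.{0} R}

def resPi (P : ProjectiveResolution X) : P.complex.X 0 ⟶ X := P.π.f 0

lemma desc_res (P : ProjectiveResolution X) (ψ : P.complex.X 0 ⟶ N)
    (h : P.complex.d 1 0 ≫ ψ = 0) :
    ∃ u : X ⟶ N, resPi P ≫ u = ψ := by
  have := P.exact₀
  exact ⟨this.desc ψ h, this.g_desc ψ h⟩

lemma chase_vanish (P : ProjectiveResolution X) (f : R) (t : ℕ)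
    (hX : f ^ t • 𝟙 X = 0) (q : M ⟶ N) (w : (f • 𝟙 M) ≫ q = 0)
    (hS : (ShortComplex.mk _ _ w).Exact) (hm : Mono (f • 𝟙 M))
    (hXN : ∀ u : X ⟶ N, u = 0) (φ : P.complex.X 1 ⟶ M)
    (hφ : P.complex.d 2 1 ≫ φ = 0) : ∃ ψ, P.complex.d 1 0 ≫ ψ = φ := by
  have step : ∀ (t : ℕ) (ψ : P.complex.X 0 ⟶ M), P.complex.d 1 0 ≫ ψ = f ^ t • φ →
      ∃ ψ, P.complex.d 1 0 ≫ ψ = φ := by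
    intro t
    induction t with
    | zero => intro ψ h; exact ⟨ψ, by simpa using h⟩
    | succ t ih =>
      intro ψ h
      have hw : f • q = 0 := by simpa using w
      have h0 : P.complex.d 1 0 ≫ (ψ ≫ q) = 0 := by
        rw [← Category.assoc, h, pow_succ, mul_smul, Linear.smul_comp, Linear.smul_comp,
          ← Linear.comp_smul, hw, comp_zero, smul_zero]
      obtain ⟨u, hu⟩ := desc_res P _ h0
      rw [hXN u, comp_zero] at hu
      let ψ' : P.complex.X 0 ⟶ M := hS.liftFromProjective ψ hu.symm
      have hψ' : ψ' ≫ (f • 𝟙 M) = ψ := hS.liftFromProjective_comp ψ hu.symm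
      apply ih ψ'
      rw [← cancel_mono (f • 𝟙 M), Category.assoc, hψ', h]
      rw [Linear.comp_smul, Category.comp_id, smul_smul, pow_succ']
  have e0 := P.exact₀
  have e1 := P.exact_succ 0
  have h1 : (f ^ t • 𝟙 (P.complex.X 0)) ≫ resPi P = 0 := by
    have : (f ^ t • 𝟙 (P.complex.X 0)) ≫ resPi P =
      resPi P ≫ (f ^ t • 𝟙 X) := by simp
    rw [this, hX, comp_zero]
  let s : P.complex.X 0 ⟶ P.complex.X 1 := e0.liftFromProjective _ h1
  have hs : s ≫ P.complex.d 1 0 = f ^ t • 𝟙 (P.complex.X 0) := e0.liftFromProjective_comp _ h1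
  have h2 : (P.complex.d 1 0 ≫ s - f ^ t • 𝟙 _) ≫ P.complex.d 1 0 = 0 := by
    simp [hs]
  let r : P.complex.X 1 ⟶ P.complex.X 2 := e1.liftFromProjective _ h2
  have hr : r ≫ P.complex.d 2 1 = (P.complex.d 1 0 ≫ s - f ^ t • 𝟙 _) :=
    e1.liftFromProjective_comp _ h2
  apply step t (s ≫ φ)
  have h3 : (P.complex.d 1 0 ≫ s - f ^ t • 𝟙 _) ≫ φ = 0 := by
    rw [← hr, Category.assoc, hφ, comp_zero]
  rw [Preadditive.sub_comp, sub_eq_zero] at h3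
  simpa using h3

lemma chase_nonvanish (f : R) (q : M ⟶ N) (w : (f • 𝟙 M) ≫ q = 0)
    (hS : (ShortComplex.mk _ _ w).Exact) (hm : Mono (f • 𝟙 M)) (hq : Epi q)
    (g : X ⟶ N) (hg : g ≠ 0) :
    ∃ e : ((Ext R (ModuleCat.{0} R) 1).obj (op X)).obj M,
      ∀ (X' : ModuleCat.{0} R) (c : X' ⟶ X), Epi c → (∀ u : X' ⟶ M, u = 0) →
        ((Ext R (ModuleCat.{0} R) 1).map c.op).app M e ≠ 0 := by
  let P := projectiveResolution X
  let π : P.complex.X 0 ⟶ X := resPi P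
  have hdπ : P.complex.d 1 0 ≫ π = 0 := P.complex_d_comp_π_f_zero
  let G : P.complex.X 0 ⟶ M := Projective.factorThru (π ≫ g) q
  have hG : G ≫ q = π ≫ g := Projective.factorThru_comp _ _
  have h1 : (P.complex.d 1 0 ≫ G) ≫ q = 0 := by
    rw [Category.assoc, hG, ← Category.assoc, hdπ, zero_comp]
  let φ : P.complex.X 1 ⟶ M := hS.liftFromProjective _ h1
  have hφ : φ ≫ (f • 𝟙 M) = P.complex.d 1 0 ≫ G := hS.liftFromProjective_comp _ h1
  have hφ0 : P.complex.d 2 1 ≫ φ = 0 := by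
    rw [← cancel_mono (f • 𝟙 M), Category.assoc, hφ]; simp
  obtain ⟨e, he⟩ := rep_exists P φ hφ0
  refine ⟨e, ?_⟩
  intro X' c hc hu h0
  let Q := projectiveResolution X'
  let π' : Q.complex.X 0 ⟶ X' := resPi Q
  have hπ' : Epi π' := inferInstanceAs (Epi (Q.π.f 0))
  let l := ProjectiveResolution.lift c Q P
  have hl : l.f 0 ≫ π = π' ≫ c := ProjectiveResolution.lift_commutes_zero c Q P
  have hrep := rep_map c l hl he
  rw [h0] at hrep
  obtain ⟨ψ, hψ⟩ := (rep_eq_zero_iff hrep).1 rfl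
  have h2 : Q.complex.d 1 0 ≫ (l.f 0 ≫ G - ψ ≫ (f • 𝟙 M)) = 0 := by
    rw [Preadditive.comp_sub, ← Category.assoc _ ψ, hψ, Category.assoc, hφ,
      ← Category.assoc, ← Category.assoc, HomologicalComplex.Hom.comm, sub_self]
  obtain ⟨u, hu'⟩ := desc_res Q _ h2
  rw [hu u, comp_zero, eq_comm, sub_eq_zero] at hu'
  have h3 : (π' ≫ c) ≫ g = 0 := by
    rw [← hl, Category.assoc, ← hG, ← Category.assoc, hu', Category.assoc, w, comp_zero]
  rw [Category.assoc] at h3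
  exact hg (zero_of_epi_comp c (zero_of_epi_comp π' h3))

lemma ext_zero_vanish (h : ∀ u : X ⟶ M, u = 0)
    (e : ((Ext R (ModuleCat.{0} R) 0).obj (op X)).obj M) : e = 0 := by
  obtain ⟨φ, hφ, h0⟩ := exists_rep (projectiveResolution X) e
  obtain ⟨u, hu⟩ := desc_res _ φ h0
  rw [h u, comp_zero] at hu
  subst hu
  exact rep_zero hφ

end Chase

section Colim

variable {R : Type} [CommRing R] (J : Ideal R) (M : ModuleCat.{0} R)

open localCohomology

abbrev lcCocone (i : ℕ) : Cocone (diagram (idealPowersDiagram J) i ⋙ (evaluation _ _).obj M) :=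
  ((evaluation _ _).obj M).mapCocone (colimit.cocone (diagram (idealPowersDiagram J) i))

def lcIsColimit (i : ℕ) : IsColimit (lcCocone J M i) :=
  isColimitOfPreserves _ (colimit.isColimit _)

lemma lc_vanish (i : ℕ)
    (h : ∀ t : ℕ, ∀ e : ((Ext R (ModuleCat.{0} R) i).obj
      (op (ModuleCat.of R (R ⧸ J ^ t)))).obj M, e = 0) :
    ¬ Nontrivial ((localCohomology J i).obj M) := by
  rw [not_nontrivial_iff_subsingleton]
  refine ⟨?_⟩
  suffices H : ∀ x : (localCohomology J i).obj M, x = 0 by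
    intro a b; rw [H a, H b]
  intro x
  obtain ⟨j, y, hy⟩ := Concrete.isColimit_exists_rep _ (lcIsColimit J M i) x
  have : y = 0 := h j.unop.unop y
  rw [← hy, this]
  exact map_zero ((lcCocone J M i).ι.app j).hom

abbrev trMap {s t : ℕ} (h : s ≤ t) :
    ModuleCat.of R (R ⧸ J ^ t) ⟶ ModuleCat.of R (R ⧸ J ^ s) :=
  ModuleCat.ofHom (Submodule.mapQ _ _ LinearMap.id (Ideal.pow_le_pow_right h))

lemma lc_nonvanish (i s : ℕ) (e : ((Ext R (ModuleCat.{0} R) i).obj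
      (op (ModuleCat.of R (R ⧸ J ^ s)))).obj M)
    (h : ∀ (t : ℕ) (hst : s ≤ t), ((Ext R (ModuleCat.{0} R) i).map (trMap J hst).op).app M e ≠ 0) :
    Nontrivial ((localCohomology J i).obj M) := by
  by_contra hn
  rw [not_nontrivial_iff_subsingleton] at hn
  have hn' : Subsingleton (lcCocone J M i).pt := hn
  obtain ⟨k, a, b, hab⟩ := Concrete.isColimit_exists_of_rep_eq _ (lcIsColimit J M i)
    (i := op (op s)) (j := op (op s)) e (0 : ((Ext R (ModuleCat.{0} R) i).obj
      (op (ModuleCat.of R (R ⧸ J ^ s)))).obj M) (hn'.elim _ _)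
  have hst : s ≤ k.unop.unop := a.unop.unop.le
  apply h _ hst
  refine Eq.trans hab ?_
  exact map_zero ((diagram (idealPowersDiagram J) i ⋙ (evaluation _ _).obj M).map b).hom

end Colim

section Alg

variable {k : Type} [Field k] {n : ℕ} {Γ : SimpleGraph (Fin n)}

def Ind (Γ : SimpleGraph (Fin n)) (b : Fin n →₀ ℕ) : Prop :=
  ∀ i j, Γ.Adj i j → b i ≠ 0 → b j ≠ 0 → False

lemma mem_edgeIdeal_iff (p : MvPolynomial (Fin n) k) :
    p ∈ edgeIdeal k Γ ↔ ∀ b, Ind Γ b → coeff b p = 0 := by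
  have hI : edgeIdeal k Γ = Ideal.span ((fun s => monomial s (1 : k)) ''
      {s | ∃ i j, Γ.Adj i j ∧ s = Finsupp.single i 1 + Finsupp.single j 1}) := by
    unfold edgeIdeal
    congr 1
    ext m
    constructor
    · rintro ⟨i, j, h, rfl⟩
      exact ⟨_, ⟨i, j, h, rfl⟩, by simp [X, monomial_mul]⟩
    · rintro ⟨_, ⟨i, j, h, rfl⟩, rfl⟩
      exact ⟨i, j, h, by simp [X, monomial_mul]⟩
  rw [hI, mem_ideal_span_monomial_image]
  constructor
  · intro h b hb
    by_contra hc
    obtain ⟨_, ⟨i, j, hij, rfl⟩, hle⟩ := h b (mem_support_iff.2 hc)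
    have hne := hij.ne
    refine hb i j hij ?_ ?_
    · have := hle i; simp at this; omega
    · have := hle j; simp at this; omega
  · intro h b hb
    by_contra hc
    refine mem_support_iff.1 hb (h b ?_)
    intro i j hij hi hj
    refine hc ⟨_, ⟨i, j, hij, rfl⟩, ?_⟩
    have hne := hij.ne
    intro l
    simp only [Finsupp.add_apply, Finsupp.single_apply]
    split_ifs with h1 h2 h2
    · exact absurd (h1.trans h2.symm) hne
    · subst h1; omega
    · subst h2; omega
    · omega

/-- sum of variables -/
def fs (k : Type) [Field k] (n : ℕ) : MvPolynomial (Fin n) k := ∑ i, X i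

open Classical in
def killF (k : Type) [Field k] (F : Set (Fin n)) :
    MvPolynomial (Fin n) k →ₐ[k] MvPolynomial (Fin n) k :=
  aeval (fun i => if i ∈ F then X i else 0)

open Classical in
lemma killF_monomial (F : Set (Fin n)) (b : Fin n →₀ ℕ) (c : k) :
    killF k F (monomial b c) = if ∀ i, b i ≠ 0 → i ∈ F then monomial b c else 0 := by
  unfold killF
  rw [aeval_monomial]
  split_ifs with h
  · rw [monomial_eq]
    congr 1
    apply Finsupp.prod_congr
    intro i hi
    rw [if_pos (h i (Finsupp.mem_support_iff.1 hi))]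
  · push Not at h
    obtain ⟨i, hi, hF⟩ := h
    rw [Finsupp.prod, Finset.prod_eq_zero (Finsupp.mem_support_iff.2 hi), mul_zero]
    rw [if_neg hF, zero_pow hi]

lemma coeff_killF (F : Set (Fin n)) (b : Fin n →₀ ℕ) (hb : ∀ i, b i ≠ 0 → i ∈ F)
    (p : MvPolynomial (Fin n) k) : coeff b (killF k F p) = coeff b p := by
  classical
  induction p using MvPolynomial.induction_on' with
  | monomial a c =>
    rw [killF_monomial]
    split_ifs with h
    · rfl
    · rw [coeff_monomial, if_neg, coeff_zero]
      rintro rfl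
      exact h hb
  | add p q hp hq => simp [hp, hq]

lemma killF_edge (F : Set (Fin n)) (hF : ∀ i ∈ F, ∀ j ∈ F, ¬ Γ.Adj i j)
    (p : MvPolynomial (Fin n) k) (hp : p ∈ edgeIdeal k Γ) : killF k F p = 0 := by
  have : edgeIdeal k Γ ≤ RingHom.ker (killF k F) := by
    unfold edgeIdeal
    rw [Ideal.span_le]
    rintro _ ⟨i, j, h, rfl⟩
    simp only [SetLike.mem_coe, RingHom.mem_ker, map_mul]
    unfold killF
    simp only [aeval_X]
    split_ifs with h1 h2
    · exact absurd h (hF i h1 j h2)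
    all_goals simp
  exact this hp

lemma killF_fs (F : Set (Fin n)) (hF : F.Nonempty) : killF k F (fs k n) ≠ 0 := by
  classical
  obtain ⟨i, hi⟩ := hF
  intro h
  have h1 := coeff_killF (k := k) F (Finsupp.single i 1) (by
    intro j hj
    rw [Finsupp.single_apply] at hj
    split_ifs at hj with h
    · exact h ▸ hi
    · simp at hj) (fs k n)
  rw [h, fs, coeff_sum] at h1
  simp [coeff_X, Finsupp.single_left_inj] at h1

lemma fs_reg (hn : 0 < n) (p : MvPolynomial (Fin n) k) (h : fs k n * p ∈ edgeIdeal k Γ) :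
    p ∈ edgeIdeal k Γ := by
  rw [mem_edgeIdeal_iff]
  intro b hb
  obtain ⟨F, hF, hne, hbF⟩ : ∃ F : Set (Fin n), (∀ i ∈ F, ∀ j ∈ F, ¬ Γ.Adj i j) ∧ F.Nonempty ∧
      ∀ i, b i ≠ 0 → i ∈ F := by
    by_cases hb0 : b = 0
    · refine ⟨{⟨0, hn⟩}, ?_, ⟨_, rfl⟩, by simp [hb0]⟩
      rintro i rfl j rfl; exact Γ.irrefl
    · refine ⟨{i | b i ≠ 0}, fun i hi j hj hij => hb i j hij hi hj, ?_, fun i hi => hi⟩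
      by_contra hc
      rw [Set.not_nonempty_iff_eq_empty] at hc
      apply hb0
      ext i
      by_contra hi
      have : i ∈ {i | b i ≠ 0} := hi
      rw [hc] at this; exact this
  have h1 := killF_edge F hF _ h
  rw [map_mul] at h1
  have h2 := (mul_eq_zero.1 h1).resolve_left (killF_fs F hne)
  rw [← coeff_killF F b hbF, h2, coeff_zero]

/-- the ideal I + (f) -/
def If (k : Type) [Field k] (Γ : SimpleGraph (Fin n)) : Ideal (MvPolynomial (Fin n) k) :=
  edgeIdeal k Γ ⊔ Ideal.span {fs k n}

lemma mem_If (p : MvPolynomial (Fin n) k) :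
    p ∈ If k Γ ↔ ∃ h, p - fs k n * h ∈ edgeIdeal k Γ := by
  unfold If
  rw [Submodule.mem_sup]
  constructor
  · rintro ⟨y, hy, z, hz, rfl⟩
    obtain ⟨h, rfl⟩ := Ideal.mem_span_singleton'.1 hz
    exact ⟨h, by convert hy using 1; ring⟩
  · rintro ⟨h, hh⟩
    exact ⟨_, hh, fs k n * h, Ideal.mul_mem_right _ _ (Ideal.mem_span_singleton_self _), by ring⟩

lemma partition_socle (A B : Set (Fin n)) (hA : A.Nonempty) (hB : B.Nonempty)
    (hd : Disjoint A B) (hu : A ∪ B = Set.univ) (hadj : ∀ a ∈ A, ∀ b ∈ B, Γ.Adj a b) :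
    ∃ g : MvPolynomial (Fin n) k, g ∉ If k Γ ∧ ∀ i, X i * g ∈ If k Γ := by
  classical
  let g : MvPolynomial (Fin n) k := ∑ i, if i ∈ A then X i else 0
  let g' : MvPolynomial (Fin n) k := ∑ i, if i ∈ B then X i else 0
  have hgg : fs k n = g + g' := by
    simp only [fs, g, g']
    rw [← Finset.sum_add_distrib]
    refine Finset.sum_congr rfl fun i _ => ?_
    have : i ∈ A ∪ B := hu ▸ Set.mem_univ i
    by_cases h : i ∈ A
    · have : i ∉ B := fun h' => Set.disjoint_left.1 hd h h'
      simp [h, this]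
    · have : i ∈ B := this.resolve_left h
      simp [h, this]
  have key : ∀ a ∈ A, ∀ b ∈ B, (X a * X b : MvPolynomial (Fin n) k) ∈ edgeIdeal k Γ :=
    fun a ha b hb => Ideal.subset_span ⟨a, b, hadj a ha b hb, rfl⟩
  refine ⟨g, ?_, ?_⟩
  · rw [mem_If]
    rintro ⟨h, hh⟩
    rw [mem_edgeIdeal_iff] at hh
    have hs : ∀ i : Fin n, Ind Γ (Finsupp.single i 1) := by
      intro i a b hab ha hb
      have h1 : i = a := by
        by_contra hc; exact ha (Finsupp.single_eq_of_ne (Ne.symm hc))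
      have h2 : i = b := by
        by_contra hc; exact hb (Finsupp.single_eq_of_ne (Ne.symm hc))
      exact hab.ne (h1.symm.trans h2)
    have hc : ∀ i : Fin n, coeff (Finsupp.single i 1) (fs k n * h) = coeff 0 h := by
      intro i
      rw [fs, Finset.sum_mul, coeff_sum]
      simp only [coeff_X_mul']
      rw [Finset.sum_eq_single i]
      · simp
      · intro j _ hj
        rw [if_neg]
        simpa using hj
      · simp
    have hgc : ∀ i : Fin n, coeff (Finsupp.single i 1) g = if i ∈ A then 1 else 0 := by
      intro i
      simp only [g]
      rw [coeff_sum, Finset.sum_eq_single i]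
      · split_ifs <;> simp
      · intro j _ hj
        split_ifs
        · rw [coeff_X, if_neg]
          rw [Finsupp.single_left_inj one_ne_zero]; exact hj
        · simp
      · simp
    obtain ⟨a, ha⟩ := hA
    obtain ⟨b, hb⟩ := hB
    have h1 := hh _ (hs a)
    have h2 := hh _ (hs b)
    rw [coeff_sub, hc, hgc] at h1 h2
    rw [if_pos ha] at h1
    rw [if_neg (fun h' => Set.disjoint_left.1 hd h' hb)] at h2
    simp at h2
    rw [h2] at h1
    simp at h1
  · intro i
    have : i ∈ A ∪ B := hu ▸ Set.mem_univ i
    rcases this with hi | hi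
    · rw [mem_If]
      refine ⟨X i, ?_⟩
      have : X i * g - fs k n * X i = - (X i * g') := by rw [hgg]; ring
      rw [this]
      refine neg_mem ?_
      simp only [g', Finset.mul_sum]
      refine sum_mem fun j _ => ?_
      split_ifs with hj
      · exact key i hi j hj
      · simp
    · refine Ideal.mem_sup_left ?_
      simp only [g, Finset.mul_sum]
      refine sum_mem fun j _ => ?_
      split_ifs with hj
      · rw [mul_comm]; exact key j hj i hi
      · simp

lemma glue (hiso : NoIsolated Γ) (hn : 0 < n)
    (hno : ¬ ∃ A B : Set (Fin n), A.Nonempty ∧ B.Nonempty ∧ Disjoint A B ∧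
        A ∪ B = Set.univ ∧ ∀ a ∈ A, ∀ b ∈ B, Γ.Adj a b)
    (h : Fin n → MvPolynomial (Fin n) k)
    (hh : ∀ i j, X j * h i - X i * h j ∈ edgeIdeal k Γ) :
    ∃ H, ∀ i, h i - X i * H ∈ edgeIdeal k Γ := by
  classical
  -- coefficients
  let e : Fin n → (Fin n →₀ ℕ) := fun i => Finsupp.single i 1
  have hcoef : ∀ i j b, Ind Γ (b + e i + e j) → coeff (b + e i) (h i) = coeff (b + e j) (h j) := by
    intro i j b hb
    have h1 := (mem_edgeIdeal_iff _).1 (hh i j) _ hb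
    rw [coeff_sub, sub_eq_zero] at h1
    have h2 : coeff (b + e i + e j) (X j * h i) = coeff (b + e i) (h i) := by
      rw [add_comm (b + e i)]; exact coeff_X_mul _ _ _
    have h3 : coeff (b + e i + e j) (X i * h j) = coeff (b + e j) (h j) := by
      rw [add_right_comm, add_comm (b + e j)]; exact coeff_X_mul _ _ _
    rw [← h2, h1, h3]
  have hIe : ∀ (b : Fin n →₀ ℕ) i, b i ≠ 0 → Ind Γ b → Ind Γ (b + e i) := by
    intro b i hi hb x y hxy hx hy
    refine hb x y hxy ?_ ?_
    · by_cases hxi : x = i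
      · exact hxi ▸ hi
      · simpa [e, Finsupp.single_apply, Ne.symm hxi] using hx
    · by_cases hxi : y = i
      · exact hxi ▸ hi
      · simpa [e, Finsupp.single_apply, Ne.symm hxi] using hy
  have hzero : ∀ i b, Ind Γ b → b i = 0 → coeff b (h i) = 0 := by
    intro i b hb hbi
    obtain ⟨j, hji, hj⟩ : ∃ j, j ≠ i ∧ Ind Γ (b + e j) := by
      by_cases hb0 : b = 0
      · obtain ⟨u, hu⟩ := hiso i
        refine ⟨u, hu.ne', ?_⟩
        intro x y hxy hx hy
        simp only [hb0, zero_add, e, Finsupp.single_apply] at hx hy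
        have hx' : u = x := by by_contra hc; simp [hc] at hx
        have hy' : u = y := by by_contra hc; simp [hc] at hy
        exact hxy.ne (hx'.symm.trans hy')
      · obtain ⟨j, hj⟩ : ∃ j, b j ≠ 0 := by
          by_contra hc; push Not at hc; exact hb0 (Finsupp.ext hc)
        exact ⟨j, fun h' => hj (h' ▸ hbi), hIe b j hj hb⟩
    have h1 := (mem_edgeIdeal_iff _).1 (hh i j) _ hj
    rw [coeff_sub, sub_eq_zero] at h1
    have h2 : coeff (b + e j) (X j * h i) = coeff b (h i) := by
      rw [add_comm b]; exact coeff_X_mul _ _ _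
    have h3 : coeff (b + e j) (X i * h j) = 0 := by
      rw [coeff_X_mul', if_neg]
      simp [e, hbi, Finsupp.single_apply, hji]
    rw [← h2, h1, h3]
  let i0 : Fin n := ⟨0, hn⟩
  have hconn : ∀ i, coeff (e i) (h i) = coeff (e i0) (h i0) := by
    by_contra hc
    push Not at hc
    obtain ⟨i1, hi1⟩ := hc
    apply hno
    refine ⟨{i | coeff (e i) (h i) = coeff (e i0) (h i0)}, {i | coeff (e i) (h i) ≠ coeff (e i0) (h i0)},
      ⟨i0, rfl⟩, ⟨i1, hi1⟩, ?_, ?_, ?_⟩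
    · rw [Set.disjoint_left]; intro x hx hx'; exact hx' hx
    · ext x; simp [em]
    · intro a ha b hb
      by_contra hab
      apply hb
      rw [Set.mem_ofPred_eq] at ha
      rw [← ha]
      have := hcoef b a 0 (by
        intro x y hxy hx hy
        have hx' : x = a ∨ x = b := by
          by_contra hc; push Not at hc
          simp [e, Finsupp.single_apply, hc.1.symm, hc.2.symm] at hx
        have hy' : y = a ∨ y = b := by
          by_contra hc; push Not at hc
          simp [e, Finsupp.single_apply, hc.1.symm, hc.2.symm] at hy
        rcases hx' with rfl | rfl <;> rcases hy' with rfl | rfl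
        · exact Γ.irrefl hxy
        · exact hab hxy
        · exact hab hxy.symm
        · exact Γ.irrefl hxy)
      simpa using this
  let pick : (Fin n →₀ ℕ) → Fin n := fun b => if hb : ∃ j, b j ≠ 0 then hb.choose else i0
  let c : (Fin n →₀ ℕ) → k := fun b => coeff (b + e (pick b)) (h (pick b))
  have hc : ∀ b i, Ind Γ (b + e i) → coeff (b + e i) (h i) = c b := by
    intro b i hb
    by_cases hb0 : ∃ j, b j ≠ 0
    · have hp : b (pick b) ≠ 0 := by
        simp only [pick, dif_pos hb0]; exact hb0.choose_spec
      exact hcoef i (pick b) b (hIe _ _ (by simp [hp]) hb)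
    · have hp : pick b = i0 := by simp only [pick, dif_neg hb0]
      have hb1 : b = 0 := by push Not at hb0; exact Finsupp.ext hb0
      simp only [c, hp]
      subst hb1
      simpa using hconn i
  let T : Finset (Fin n →₀ ℕ) := Finset.univ.biUnion fun i => (h i).support.image (fun a => a - e i)
  have hT : ∀ b, b ∉ T → c b = 0 := by
    intro b hb
    by_contra hcb
    apply hb
    simp only [T, Finset.mem_biUnion, Finset.mem_image]
    exact ⟨pick b, Finset.mem_univ _, b + e (pick b), mem_support_iff.2 hcb, by simp⟩
  refine ⟨∑ b ∈ T, monomial b (c b), fun i => ?_⟩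
  have hH : ∀ b, coeff b (∑ b ∈ T, monomial b (c b)) = c b := by
    intro b
    rw [coeff_sum]
    simp only [coeff_monomial]
    rw [Finset.sum_ite_eq']
    split_ifs with hb
    · rfl
    · exact (hT b hb).symm
  rw [mem_edgeIdeal_iff]
  intro b hb
  rw [coeff_sub, sub_eq_zero]
  by_cases hbi : b i = 0
  · rw [hzero i b hb hbi, coeff_X_mul', if_neg]
    simp [hbi]
  · obtain ⟨a, rfl⟩ : ∃ a, b = a + e i := by
      refine ⟨b - e i, ?_⟩
      ext x
      simp only [Finsupp.add_apply, Finsupp.tsub_apply, e, Finsupp.single_apply]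
      split_ifs with hx
      · subst hx; omega
      · omega
    rw [hc a i hb]
    have : coeff (a + e i) (X i * ∑ b ∈ T, monomial b (c b)) = coeff a (∑ b ∈ T, monomial b (c b)) := by
      rw [add_comm]; exact coeff_X_mul _ _ _
    rw [this, hH]

lemma no_socle (hiso : NoIsolated Γ) (hn : 0 < n)
    (hno : ¬ ∃ A B : Set (Fin n), A.Nonempty ∧ B.Nonempty ∧ Disjoint A B ∧
        A ∪ B = Set.univ ∧ ∀ a ∈ A, ∀ b ∈ B, Γ.Adj a b)
    (g : MvPolynomial (Fin n) k) (hg : ∀ i, X i * g ∈ If k Γ) : g ∈ If k Γ := by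
  simp only [mem_If] at hg
  choose h hh using hg
  obtain ⟨H, hH⟩ := glue hiso hn hno h (by
    intro i j
    apply fs_reg hn
    have := sub_mem (Ideal.mul_mem_left _ (X i) (hh j)) (Ideal.mul_mem_left _ (X j) (hh i))
    convert this using 1
    ring)
  rw [mem_If]
  refine ⟨H, fs_reg hn _ ?_⟩
  rw [fs, Finset.sum_mul, ← fs]
  refine sum_mem fun i _ => ?_
  have := add_mem (hh i) (Ideal.mul_mem_left _ (fs k n) (hH i))
  convert this using 1
  ring

lemma no_socle_pow (hiso : NoIsolated Γ) (hn : 0 < n)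
    (hno : ¬ ∃ A B : Set (Fin n), A.Nonempty ∧ B.Nonempty ∧ Disjoint A B ∧
        A ∪ B = Set.univ ∧ ∀ a ∈ A, ∀ b ∈ B, Γ.Adj a b) (t : ℕ)
    (g : MvPolynomial (Fin n) k) (hg : ∀ r ∈ maxIdeal k (Fin n) ^ t, r * g ∈ If k Γ) :
    g ∈ If k Γ := by
  induction t generalizing g with
  | zero => simpa using hg 1 (by simp)
  | succ t ih =>
    apply no_socle hiso hn hno
    intro i
    apply ih
    intro r hr
    rw [← mul_assoc]
    apply hg
    rw [pow_succ]
    exact Ideal.mul_mem_mul hr (Ideal.subset_span ⟨i, rfl⟩)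

lemma fs_mem : fs k n ∈ maxIdeal k (Fin n) :=
  sum_mem fun i _ => Ideal.subset_span ⟨i, rfl⟩

end Alg

section Main

lemma quot_hom_zero {R : Type} [CommRing R] (J K : Ideal R)
    (h : ∀ g : R, (∀ r ∈ J, r * g ∈ K) → g ∈ K)
    (u : ModuleCat.of R (R ⧸ J) ⟶ ModuleCat.of R (R ⧸ K)) : u = 0 := by
  let v : (R ⧸ J) →ₗ[R] (R ⧸ K) := u.hom
  obtain ⟨g, hg⟩ := Ideal.Quotient.mk_surjective (v (Ideal.Quotient.mk J 1))
  have hgK : g ∈ K := by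
    apply h
    intro r hr
    rw [← Ideal.Quotient.eq_zero_iff_mem, map_mul, hg]
    have h1 : r • v (Ideal.Quotient.mk J 1) = 0 := by
      rw [← map_smul]
      have : r • (Ideal.Quotient.mk J 1) = Ideal.Quotient.mk J r := by
        rw [Algebra.smul_def, map_one, mul_one]; rfl
      rw [this, Ideal.Quotient.eq_zero_iff_mem.2 hr, map_zero]
    rwa [Algebra.smul_def] at h1
  rw [← Ideal.Quotient.eq_zero_iff_mem, hg] at hgK
  have : v = 0 := by
    apply LinearMap.ext
    intro y
    obtain ⟨y, rfl⟩ := Ideal.Quotient.mk_surjective y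
    have : Ideal.Quotient.mk J y = y • (Ideal.Quotient.mk J 1) := by
      rw [Algebra.smul_def, map_one, mul_one]; rfl
    rw [this, map_smul, hgK, smul_zero]; rfl
  exact ModuleCat.hom_ext this

variable {k : Type} [Field k] {n : ℕ} {Γ : SimpleGraph (Fin n)}

abbrev MI (k : Type) [Field k] (Γ : SimpleGraph (Fin n)) :
    ModuleCat.{0} (MvPolynomial (Fin n) k) :=
  ModuleCat.of _ (MvPolynomial (Fin n) k ⧸ edgeIdeal k Γ)

abbrev NI (k : Type) [Field k] (Γ : SimpleGraph (Fin n)) :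
    ModuleCat.{0} (MvPolynomial (Fin n) k) :=
  ModuleCat.of _ (MvPolynomial (Fin n) k ⧸ If k Γ)

def qI (k : Type) [Field k] (Γ : SimpleGraph (Fin n)) : MI k Γ ⟶ NI k Γ :=
  ModuleCat.ofHom (Submodule.mapQ _ _ LinearMap.id (le_sup_left : edgeIdeal k Γ ≤ If k Γ))

lemma qI_mk (p : MvPolynomial (Fin n) k) :
    qI k Γ (Ideal.Quotient.mk (edgeIdeal k Γ) p) = Ideal.Quotient.mk (If k Γ) p := rfl

lemma fmul_mk (p : MvPolynomial (Fin n) k) :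
    (fs k n • 𝟙 (MI k Γ)) (Ideal.Quotient.mk (edgeIdeal k Γ) p) =
      Ideal.Quotient.mk (edgeIdeal k Γ) (fs k n * p) := rfl

lemma qI_w : (fs k n • 𝟙 (MI k Γ)) ≫ qI k Γ = 0 := by
  refine ModuleCat.hom_ext (LinearMap.ext fun x => ?_)
  obtain ⟨p, rfl⟩ := Ideal.Quotient.mk_surjective (I := edgeIdeal k Γ) x
  refine (qI_mk (fs k n * p)).trans ?_
  exact Ideal.Quotient.eq_zero_iff_mem.2 ((mem_If _).2 ⟨p, by simp⟩)

lemma qI_exact : (ShortComplex.mk _ _ (qI_w (k := k) (Γ := Γ))).Exact := by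
  rw [ShortComplex.moduleCat_exact_iff]
  intro x hx
  obtain ⟨p, rfl⟩ := Ideal.Quotient.mk_surjective (I := edgeIdeal k Γ) x
  obtain ⟨h, hh⟩ := (mem_If _).1 (Ideal.Quotient.eq_zero_iff_mem.1 ((qI_mk p).symm.trans hx))
  exact ⟨Ideal.Quotient.mk (edgeIdeal k Γ) h, ((Ideal.Quotient.eq).2 hh).symm⟩

lemma qI_epi : Epi (qI k Γ) := by
  rw [ModuleCat.epi_iff_surjective]
  intro x
  obtain ⟨p, rfl⟩ := Ideal.Quotient.mk_surjective (I := If k Γ) x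
  exact ⟨_, qI_mk p⟩

lemma fI_mono (hn : 0 < n) : Mono (fs k n • 𝟙 (MI k Γ)) := by
  rw [ModuleCat.mono_iff_injective]
  rw [injective_iff_map_eq_zero]
  intro x hx
  obtain ⟨p, rfl⟩ := Ideal.Quotient.mk_surjective (I := edgeIdeal k Γ) x
  exact Ideal.Quotient.eq_zero_iff_mem.2
    (fs_reg hn p (Ideal.Quotient.eq_zero_iff_mem.1 ((fmul_mk p).symm.trans hx)))

lemma hom_M_zero (hn : 0 < n) (t : ℕ)
    (u : ModuleCat.of _ (MvPolynomial (Fin n) k ⧸ maxIdeal k (Fin n) ^ t) ⟶ MI k Γ) : u = 0 := by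
  apply quot_hom_zero
  intro g hg
  have h1 := hg _ (Ideal.pow_mem_pow fs_mem t)
  clear hg
  induction t with
  | zero => simpa using h1
  | succ t ih =>
    apply ih 0
    apply fs_reg hn
    rw [← mul_assoc, ← pow_succ']
    exact h1

lemma H0_zero (hn : 0 < n) : ¬ Nontrivial (locCoh k (edgeIdeal k Γ) 0) :=
  lc_vanish _ _ 0 fun t e => ext_zero_vanish (hom_M_zero hn t) e

lemma H1_zero (hiso : NoIsolated Γ)
    (hno : ¬ ∃ A B : Set (Fin n), A.Nonempty ∧ B.Nonempty ∧ Disjoint A B ∧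
        A ∪ B = Set.univ ∧ ∀ a ∈ A, ∀ b ∈ B, Γ.Adj a b) :
    ¬ Nontrivial (locCoh k (edgeIdeal k Γ) 1) := by
  apply lc_vanish
  intro t e
  rcases Nat.eq_zero_or_pos n with rfl | hn
  · have hp : Module.Projective (MvPolynomial (Fin 0) k)
        (MvPolynomial (Fin 0) k ⧸ maxIdeal k (Fin 0) ^ t) := by
      cases t with
      | zero =>
        rw [pow_zero, Ideal.one_eq_top]
        infer_instance
      | succ t =>
        have h0 : maxIdeal k (Fin 0) ^ (t + 1) = ⊥ := by
          have : maxIdeal k (Fin 0) = ⊥ := by simp [maxIdeal]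
          rw [this, Submodule.bot_pow (by omega)]
        exact Module.Projective.of_equiv (Submodule.quotEquivOfEqBot _ h0).symm
    have hz := isZero_Ext_succ_of_projective (R := MvPolynomial (Fin 0) k)
      (ModuleCat.of _ (MvPolynomial (Fin 0) k ⧸ maxIdeal k (Fin 0) ^ t)) (MI k Γ) 0
    exact (ModuleCat.subsingleton_of_isZero hz).elim _ _
  · obtain ⟨φ, hφ, h0⟩ := exists_rep (projectiveResolution _) e
    refine (rep_eq_zero_iff hφ).2 ?_
    refine chase_vanish _ (fs k n) t ?_ (qI k Γ) qI_w qI_exact (fI_mono hn) ?_ φ h0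
    · refine ModuleCat.hom_ext (LinearMap.ext fun x => ?_)
      obtain ⟨p, rfl⟩ := Ideal.Quotient.mk_surjective (I := maxIdeal k (Fin n) ^ t) x
      exact Ideal.Quotient.eq_zero_iff_mem.2
        (Ideal.mul_mem_right p _ (Ideal.pow_mem_pow fs_mem t))
    · apply quot_hom_zero
      exact no_socle_pow hiso hn hno t

lemma H1_ne (A B : Set (Fin n)) (hA : A.Nonempty) (hB : B.Nonempty)
    (hd : Disjoint A B) (hu : A ∪ B = Set.univ) (hadj : ∀ a ∈ A, ∀ b ∈ B, Γ.Adj a b) :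
    Nontrivial (locCoh k (edgeIdeal k Γ) 1) := by
  have hn : 0 < n := hA.some.pos
  obtain ⟨g, hg, hgm⟩ := partition_socle (k := k) A B hA hB hd hu hadj
  have hle : maxIdeal k (Fin n) ^ 1 ≤
      LinearMap.ker (LinearMap.toSpanSingleton (MvPolynomial (Fin n) k) _
        (Ideal.Quotient.mk (If k Γ) g)) := by
    rw [pow_one, maxIdeal, Ideal.span_le]
    rintro _ ⟨i, rfl⟩
    exact Ideal.Quotient.eq_zero_iff_mem.2 (hgm i)
  let G : ModuleCat.of _ (MvPolynomial (Fin n) k ⧸ maxIdeal k (Fin n) ^ 1) ⟶ NI k Γ :=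
    ModuleCat.ofHom (Submodule.liftQ _ _ hle)
  have hG : G ≠ 0 := by
    intro h0
    have h1 : (1 : MvPolynomial (Fin n) k) • (Ideal.Quotient.mk (If k Γ) g) = 0 :=
      congrArg (fun w => w (Ideal.Quotient.mk (maxIdeal k (Fin n) ^ 1) 1)) h0
    rw [one_smul] at h1
    exact hg (Ideal.Quotient.eq_zero_iff_mem.1 h1)
  obtain ⟨e, he⟩ := chase_nonvanish (fs k n) (qI k Γ) qI_w qI_exact (fI_mono hn) qI_epi G hG
  refine lc_nonvanish _ _ 1 1 e ?_
  intro t ht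
  refine he _ _ ?_ (hom_M_zero hn t)
  rw [ModuleCat.epi_iff_surjective]
  intro x
  obtain ⟨p, rfl⟩ := Ideal.Quotient.mk_surjective (I := maxIdeal k (Fin n) ^ 1) x
  exact ⟨Ideal.Quotient.mk _ p, rfl⟩

end Main

/-- `depth R/I = 1` if and only if the vertex set admits a partition
`V = A ⊔ B` into two nonempty sets with every vertex of `A` adjacent to every vertex
of `B`. -/
theorem stmt14 (k : Type) [Field k] (n : ℕ) (Γ : SimpleGraph (Fin n))
    (hiso : NoIsolated Γ) :
    rDepth k (edgeIdeal k Γ) = 1 ↔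
      ∃ A B : Set (Fin n), A.Nonempty ∧ B.Nonempty ∧ Disjoint A B ∧
        A ∪ B = Set.univ ∧ ∀ a ∈ A, ∀ b ∈ B, Γ.Adj a b := by
  constructor
  · intro h
    by_contra hno
    have hne : { i | Nontrivial (locCoh k (edgeIdeal k Γ) i) }.Nonempty := by
      by_contra hc
      rw [Set.not_nonempty_iff_eq_empty] at hc
      rw [rDepth, hc, Nat.sInf_empty] at h
      exact absurd h (by norm_num)
    have hm := Nat.sInf_mem hne
    change sInf _ = 1 at h
    rw [h] at hm
    exact H1_zero hiso hno hm
  · rintro ⟨A, B, hA, hB, hd, hu, hadj⟩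
    have h1 : Nontrivial (locCoh k (edgeIdeal k Γ) 1) := H1_ne A B hA hB hd hu hadj
    have hle : rDepth k (edgeIdeal k Γ) ≤ 1 := Nat.sInf_le h1
    have hm : Nontrivial (locCoh k (edgeIdeal k Γ) (rDepth k (edgeIdeal k Γ))) :=
      Nat.sInf_mem (s := { i | Nontrivial (locCoh k (edgeIdeal k Γ) i) }) ⟨1, h1⟩
    have h0 : rDepth k (edgeIdeal k Γ) ≠ 0 := by
      intro h0
      rw [h0] at hm
      exact H0_zero hA.some.pos hm
    omega

end
end

section
/- Let Γ be a connected non-bipartite graph. If depth R/I^2 = 1, then depth R/I^5 = 0, i.e., the maximal graded ideal m is an associated prime of R/I^5. -/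
open MvPolynomial

noncomputable section

lemma ext_lin {R M P2 P1 P0 : Type*} [CommRing R] [AddCommGroup M] [Module R M]
    [AddCommGroup P2] [Module R P2] [AddCommGroup P1] [Module R P1] [AddCommGroup P0] [Module R P0]
    (J : Ideal R) [Module.Projective R P0]
    (d2 : P2 →ₗ[R] P1) (d1 : P1 →ₗ[R] P0) (p : P0 →ₗ[R] R ⧸ J)
    (e1 : LinearMap.ker d1 ≤ LinearMap.range d2) (e0 : LinearMap.range d1 = LinearMap.ker p)
    (hp : Function.Surjective p)
    (hM : ∀ φ : J →ₗ[R] M, ∃ g : M, ∀ j : J, φ j = (j : R) • g)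
    (f : P1 →ₗ[R] M) (hf : f ∘ₗ d2 = 0) : ∃ h : P0 →ₗ[R] M, h ∘ₗ d1 = f := by
  obtain ⟨α, hα⟩ := Module.projective_lifting_property (Submodule.mkQ J) p
    (Submodule.mkQ_surjective J)
  obtain ⟨p0, hp0⟩ := hp 1
  have hker : LinearMap.ker d1 ≤ LinearMap.ker f := by
    intro x hx
    obtain ⟨y, rfl⟩ := e1 hx
    exact LinearMap.congr_fun hf y
  let fb : LinearMap.range d1 →ₗ[R] M :=
    (LinearMap.ker d1).liftQ f hker ∘ₗ (LinearMap.quotKerEquivRange d1).symm.toLinearMap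
  have hfb : ∀ x (hx : d1 x ∈ LinearMap.range d1), fb ⟨d1 x, hx⟩ = f x := by
    intro x hx
    have : (LinearMap.quotKerEquivRange d1).symm ⟨d1 x, hx⟩ = Submodule.Quotient.mk x := by
      rw [LinearEquiv.symm_apply_eq]; rfl
    simp [fb, this]
  have hpm : ∀ r : R, p (r • p0) = Submodule.Quotient.mk r := by
    intro r
    rw [map_smul, hp0]
    change Submodule.Quotient.mk (r * 1) = _
    rw [mul_one]
  have hαp : ∀ x, Submodule.Quotient.mk (α x) = p x := fun x => LinearMap.congr_fun hα x
  let φ : J →ₗ[R] M := fb ∘ₗ LinearMap.codRestrict (LinearMap.range d1)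
    ((LinearMap.toSpanSingleton R P0 p0).comp J.subtype) (by
      intro c
      rw [e0, LinearMap.mem_ker]
      simp only [LinearMap.comp_apply, LinearMap.toSpanSingleton_apply]
      rw [hpm, Submodule.Quotient.mk_eq_zero]
      exact c.2)
  obtain ⟨g, hg⟩ := hM φ
  let h : P0 →ₗ[R] M := fb ∘ₗ LinearMap.codRestrict (LinearMap.range d1)
    (LinearMap.id - (LinearMap.toSpanSingleton R P0 p0).comp α) (by
      intro c
      rw [e0, LinearMap.mem_ker]
      simp only [LinearMap.sub_apply, LinearMap.comp_apply, LinearMap.toSpanSingleton_apply, map_sub]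
      rw [hpm, hαp]; simp) + (LinearMap.toSpanSingleton R M g).comp α
  refine ⟨h, ?_⟩
  ext x
  have hJ : α (d1 x) ∈ J := by
    rw [← Submodule.Quotient.mk_eq_zero, hαp, ← LinearMap.mem_ker, ← e0]; exact ⟨x, rfl⟩
  have h1 := hg ⟨_, hJ⟩
  simp only [h, LinearMap.comp_apply, LinearMap.add_apply, LinearMap.toSpanSingleton_apply]
  rw [← h1, ← hfb x ⟨x, rfl⟩]
  simp only [φ, LinearMap.comp_apply]
  rw [← map_add]
  congr 1
  ext
  simp

open CategoryTheory Limits in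
lemma ext_zero {R : Type} [CommRing R] (J : Ideal R) (M : ModuleCat.{0} R)
    (hM : ∀ φ : J →ₗ[R] M, ∃ g : M, ∀ j : J, φ j = (j : R) • g) :
    IsZero (((Ext R (ModuleCat.{0} R) 1).obj (Opposite.op (ModuleCat.of R (R ⧸ J)))).obj M) := by
  let P := ProjectiveResolution.of (ModuleCat.of R (R ⧸ J))
  refine IsZero.of_iso ?_ (P.isoExt 1 M)
  rw [← HomologicalComplex.exactAt_iff_isZero_homology,
    HomologicalComplex.exactAt_iff' _ 0 1 2 (by simp) (by simp)]
  rw [ShortComplex.moduleCat_exact_iff]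
  intro (f : P.complex.X 1 ⟶ M) hf
  have hf' : P.complex.d 2 1 ≫ f = 0 := hf
  have e1 := P.complex_exactAt_succ 0
  rw [HomologicalComplex.exactAt_iff' _ 2 1 0 (by simp) (by simp),
    ShortComplex.moduleCat_exact_iff] at e1
  have e0 := P.exact₀
  rw [ShortComplex.moduleCat_exact_iff] at e0
  have hsurj : Function.Surjective (P.π.f 0) := by
    rw [← ModuleCat.epi_iff_surjective]; infer_instance
  have : Module.Projective R (P.complex.X 0) := by
    have := P.projective 0
    exact (IsProjective.iff_projective _).2 this
  obtain ⟨h, hh⟩ := ext_lin J (P.complex.d 2 1).hom (P.complex.d 1 0).hom (P.π.f 0).hom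
    (by
      intro x hx
      obtain ⟨y, hy⟩ := e1 x hx
      exact ⟨y, hy⟩)
    (by
      ext x
      constructor
      · rintro ⟨y, rfl⟩
        have := P.complex_d_comp_π_f_zero
        exact ConcreteCategory.congr_hom this y
      · intro hx
        obtain ⟨y, hy⟩ := e0 x hx
        exact ⟨y, hy⟩)
    hsurj hM f.hom (by
      rw [← ModuleCat.hom_comp, hf']; rfl)
  refine ⟨ModuleCat.ofHom h, ?_⟩
  change P.complex.d 1 0 ≫ ModuleCat.ofHom h = f
  ext x
  exact LinearMap.congr_fun hh x

open CategoryTheory Limits in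
lemma isZero_colim {R : Type} [CommRing R] {D : Type} [SmallCategory D] (F : D ⥤ ModuleCat.{0} R)
    (h : ∀ d, IsZero (F.obj d)) : IsZero (colimit F) := by
  rw [IsZero.iff_id_eq_zero]
  apply colimit.hom_ext
  intro d
  exact (h d).eq_of_src _ _

open CategoryTheory Limits in
lemma locCoh_zero {R : Type} [CommRing R] (J : Ideal R) (M : ModuleCat.{0} R)
    (hM : ∀ t : ℕ, ∀ φ : (J ^ t : Ideal R) →ₗ[R] M, ∃ g : M, ∀ j : (J ^ t : Ideal R),
      φ j = (j : R) • g) :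
    ¬ Nontrivial ((localCohomology J 1).obj M) := by
  have hz : IsZero ((localCohomology J 1).obj M) := by
    have := localCohomology.hasColimitDiagram.{0,0} (localCohomology.idealPowersDiagram J) 1
    refine IsZero.of_iso ?_ (colimitObjIsoColimitCompEvaluation
      (localCohomology.diagram (localCohomology.idealPowersDiagram J) 1) M)
    apply isZero_colim
    intro d
    exact ext_zero _ M (hM _)
  have := ModuleCat.subsingleton_of_isZero hz
  rwa [not_nontrivial_iff_subsingleton]

lemma devissage {R M : Type*} [CommRing R] [AddCommGroup M] [Module R M] (m : Ideal R)
    (h0 : ∀ g : M, (∀ x ∈ m, x • g = 0) → g = 0)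
    (h1 : ∀ φ : m →ₗ[R] M, ∃ g : M, ∀ j : m, φ j = (j : R) • g) (t : ℕ) :
    ∀ φ : (m ^ t : Ideal R) →ₗ[R] M, ∃ g : M, ∀ j : (m ^ t : Ideal R), φ j = (j : R) • g := by
  induction t with
  | zero =>
    intro φ
    refine ⟨φ ⟨1, by simp⟩, fun j => ?_⟩
    rw [← map_smul]
    congr 1
    ext; simp
  | succ t ih =>
    intro φ
    have hmem : ∀ u : (m ^ t : Ideal R), ∀ f : m, (f : R) * (u : R) ∈ m ^ (t + 1) := by
      intro u f
      rw [pow_succ']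
      exact Ideal.mul_mem_mul f.2 u.2
    have key : ∀ u : (m ^ t : Ideal R), ∃ g : M, ∀ f : m, φ ⟨f * u, hmem u f⟩ = (f : R) • g := by
      intro u
      let ψ : m →ₗ[R] M := φ ∘ₗ LinearMap.codRestrict (m ^ (t + 1)) 
        ((LinearMap.toSpanSingleton R R (u : R)).comp m.subtype) (by
          intro c; simpa using hmem u c)
      obtain ⟨g, hg⟩ := h1 ψ
      refine ⟨g, fun f => ?_⟩
      rw [← hg f]
      rfl
    choose G hG using key
    have uniq : ∀ a b : M, (∀ f : m, (f : R) • a = (f : R) • b) → a = b := by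
      intro a b hab
      rw [← sub_eq_zero]
      apply h0
      intro x hx
      rw [smul_sub, sub_eq_zero]
      exact hab ⟨x, hx⟩
    let Ψ : (m ^ t : Ideal R) →ₗ[R] M :=
      { toFun := G
        map_add' := by
          intro a b
          apply uniq
          intro f
          rw [smul_add, ← hG, ← hG, ← hG, ← map_add]
          congr 1
          ext; simp [mul_add]
        map_smul' := by
          intro r a
          apply uniq
          intro f
          simp only [RingHom.id_apply]
          rw [smul_comm, ← hG, ← hG, ← map_smul]
          congr 1
          ext; simp; ring }
    obtain ⟨g, hg⟩ := ih Ψ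
    refine ⟨g, ?_⟩
    have : ∀ x (hx : x ∈ m ^ t * m) (hx' : x ∈ m ^ (t + 1)), φ ⟨x, hx'⟩ = x • g := by
      intro x hx
      induction hx using Submodule.mul_induction_on' with
      | mem_mul_mem a ha b hb =>
        intro hx'
        have h2 := hG ⟨a, ha⟩ ⟨b, hb⟩
        have h3 : G ⟨a, ha⟩ = a • g := hg ⟨a, ha⟩
        rw [h3, smul_smul] at h2
        have h4 : (a * b) • g = (b * a) • g := by rw [mul_comm]
        rw [h4]
        refine Eq.trans ?_ h2
        congr 1
        ext
        exact mul_comm _ _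
      | add a ha b hb iha ihb =>
        intro hx'
        have ha' : a ∈ m ^ (t + 1) := by rw [pow_succ]; exact ha
        have hb' : b ∈ m ^ (t + 1) := by rw [pow_succ]; exact hb
        rw [add_smul, ← iha ha', ← ihb hb', ← map_add]
        rfl
    intro j
    exact this j (by rw [← pow_succ]; exact j.2) j.2


lemma extract0 (k : Type) [Field k] (σ : Type) (S : Set (σ →₀ ℕ)) 
    (J : Ideal (MvPolynomial σ k)) (hJ : ∀ p, p ∈ J ↔ ∀ b ∈ p.support, b ∈ S)
    (nZ : ∀ d, (∀ j, d + Finsupp.single j 1 ∈ S) → d ∈ S) (g : MvPolynomial σ k ⧸ J)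
    (hg : ∀ x ∈ maxIdeal k σ, x • g = 0) : g = 0 := by
  obtain ⟨p, rfl⟩ := Ideal.Quotient.mk_surjective g
  rw [Ideal.Quotient.eq_zero_iff_mem, hJ]
  intro b hb
  apply nZ
  intro j
  have h1 : X j * p ∈ J := by
    rw [← Ideal.Quotient.eq_zero_iff_mem]
    exact hg (X j) (Ideal.subset_span ⟨j, rfl⟩)
  rw [hJ] at h1
  apply h1
  rw [mem_support_iff, add_comm, coeff_X_mul]
  rwa [mem_support_iff] at hb

lemma extract1 (k : Type) [Field k] (σ : Type) [Fintype σ] [DecidableEq σ] (S : Set (σ →₀ ℕ)) 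
    (J : Ideal (MvPolynomial σ k)) (hJ : ∀ p, p ∈ J ↔ ∀ b ∈ p.support, b ∈ S)
    (nA : ∀ (b : σ →₀ ℕ) (A : Set σ) (i j : σ), i ∈ A → j ∉ A → b + Finsupp.single i 1 ∉ S → 
      b + Finsupp.single j 1 ∉ S → ∃ p q, p ∈ A ∧ q ∉ A ∧ b + Finsupp.single p 1 ∉ S ∧
        b + Finsupp.single q 1 ∉ S ∧ b + Finsupp.single p 1 + Finsupp.single q 1 ∉ S)
    (nB : ∀ (v : σ) (d : σ →₀ ℕ), d v = 0 → (∀ j, j ≠ v → d + Finsupp.single j 1 ∈ S) → d ∈ S)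
    (φ : maxIdeal k σ →ₗ[MvPolynomial σ k] MvPolynomial σ k ⧸ J) :
    ∃ g : MvPolynomial σ k ⧸ J, ∀ j : maxIdeal k σ, φ j = (j : MvPolynomial σ k) • g := by
  classical
  have hX : ∀ i, (X i : MvPolynomial σ k) ∈ maxIdeal k σ := fun i => Ideal.subset_span ⟨i, rfl⟩
  have : ∀ i, ∃ F : MvPolynomial σ k, Ideal.Quotient.mk J F = φ ⟨X i, hX i⟩ :=
    fun i => Ideal.Quotient.mk_surjective _
  choose F hF using this
  have rel : ∀ i j, X j * F i - X i * F j ∈ J := by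
    intro i j
    rw [← Ideal.Quotient.eq_zero_iff_mem, map_sub, sub_eq_zero]
    have h1 : Ideal.Quotient.mk J (X j * F i) = (X j : MvPolynomial σ k) • φ ⟨X i, hX i⟩ := by
      rw [← hF]; rfl
    have h2 : Ideal.Quotient.mk J (X i * F j) = (X i : MvPolynomial σ k) • φ ⟨X j, hX j⟩ := by
      rw [← hF]; rfl
    rw [h1, h2, ← map_smul, ← map_smul]
    congr 1
    ext1
    exact mul_comm _ _
  have rel' : ∀ i j d, d ∉ S → coeff d (X j * F i) = coeff d (X i * F j) := by
    intro i j d hd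
    by_contra hne
    apply hd
    apply (hJ _).1 (rel i j)
    rw [mem_support_iff, coeff_sub]
    exact sub_ne_zero.2 hne
  have adj : ∀ b i j, b + Finsupp.single i 1 + Finsupp.single j 1 ∉ S →
      coeff (b + Finsupp.single i 1) (F i) = coeff (b + Finsupp.single j 1) (F j) := by
    intro b i j hd
    have := rel' i j _ hd
    rw [add_comm _ (Finsupp.single j 1), coeff_X_mul] at this
    rw [this, ← add_assoc, add_comm _ (Finsupp.single i 1), coeff_X_mul, add_comm]
  have const : ∀ b i j, b + Finsupp.single i 1 ∉ S → b + Finsupp.single j 1 ∉ S → 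
      coeff (b + Finsupp.single i 1) (F i) = coeff (b + Finsupp.single j 1) (F j) := by
    intro b i j hi hj
    by_contra hne
    obtain ⟨p, q, hp, hq, -, -, h⟩ := nA b {l | coeff (b + Finsupp.single i 1) (F i) = 
      coeff (b + Finsupp.single l 1) (F l)} i j rfl hne hi hj
    apply hq
    have := adj b p q h
    simp only [Set.mem_ofPred_eq] at hp ⊢
    rw [hp, this]
  let lam : (σ →₀ ℕ) → k := fun b => if h : ∃ i, b + Finsupp.single i 1 ∉ S then 
    coeff (b + Finsupp.single h.choose 1) (F h.choose) else 0
  have hlam : ∀ b i, b + Finsupp.single i 1 ∉ S → lam b = coeff (b + Finsupp.single i 1) (F i) := by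
    intro b i hi
    have h : ∃ i, b + Finsupp.single i 1 ∉ S := ⟨i, hi⟩
    simp only [lam, dif_pos h]
    exact const b _ _ h.choose_spec hi
  let T : Finset (σ →₀ ℕ) := Finset.univ.biUnion fun i => 
    (F i).support.image fun c => c - Finsupp.single i 1
  let G : MvPolynomial σ k := ∑ b ∈ T, monomial b (lam b)
  have hG : ∀ b i, b + Finsupp.single i 1 ∉ S → coeff b G = coeff (b + Finsupp.single i 1) (F i) := by
    intro b i hi
    rw [← hlam b i hi]
    simp only [G, coeff_sum, coeff_monomial, Finset.sum_ite_eq']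
    split_ifs with hb
    · rfl
    · rw [hlam b i hi]
      by_contra hne
      apply hb
      simp only [T, Finset.mem_biUnion, Finset.mem_univ, true_and, Finset.mem_image]
      refine ⟨i, _, mem_support_iff.2 (Ne.symm hne), ?_⟩
      simp
  have hFG : ∀ i, F i - X i * G ∈ J := by
    intro i
    rw [hJ]
    intro d hd
    by_contra hdS
    rw [mem_support_iff, coeff_sub] at hd
    apply hd
    by_cases hdi : d i = 0
    · have h1 : coeff d (X i * G) = 0 := by
        rw [coeff_X_mul', if_neg]
        simpa using hdi
      rw [h1, sub_zero]
      by_contra hne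
      apply hdS
      apply nB i d hdi
      intro j hj
      by_contra hjS
      have := rel' i j _ hjS
      rw [add_comm, coeff_X_mul, coeff_X_mul', if_neg] at this
      · exact hne this
      · simp [hdi, hj]
    · have : d = (d - Finsupp.single i 1) + Finsupp.single i 1 := by
        ext l
        by_cases hl : i = l
        · subst hl; simp; omega
        · simp [hl]
      generalize d - Finsupp.single i 1 = b at this
      subst this
      rw [← hG b i hdS]
      rw [add_comm, coeff_X_mul, sub_self]
  refine ⟨Ideal.Quotient.mk J G, ?_⟩
  have hall : ∀ x (hx : x ∈ Ideal.span (Set.range (X : σ → MvPolynomial σ k))), 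
      φ ⟨x, hx⟩ = x • Ideal.Quotient.mk J G := by
    intro x hx
    induction hx using Submodule.span_induction with
    | mem x h =>
      obtain ⟨i, rfl⟩ := h
      rw [← hF i]
      change _ = Ideal.Quotient.mk J (X i * G)
      rw [Ideal.Quotient.eq]
      exact hFG i
    | zero => rw [zero_smul]; exact map_zero φ
    | add x y hx hy ihx ihy =>
      rw [add_smul, ← ihx, ← ihy, ← map_add]; rfl
    | smul a x hx ih =>
      rw [smul_assoc, ← ih, ← map_smul]; rfl
  intro j
  exact hall j j.2

def In2 {σ : Type} [DecidableEq σ] (Γ : SimpleGraph σ) (d : σ → ℕ) : Prop :=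
  ∃ a b c e, Γ.Adj a b ∧ Γ.Adj c e ∧ ∀ t, (if a = t then 1 else 0) + (if b = t then 1 else 0) +
    (if c = t then 1 else 0) + (if e = t then 1 else 0) ≤ d t

/-- add a vertex -/
def ad {σ : Type} [DecidableEq σ] (d : σ → ℕ) (p : σ) : σ → ℕ :=
  fun t => d t + (if p = t then 1 else 0)

section
variable {σ : Type} [DecidableEq σ] {Γ : SimpleGraph σ} {d : σ → ℕ}

lemma c_L1 (hd : ¬ In2 Γ d) {p : σ} (hp : 0 < d p) (h : In2 Γ (ad d p)) :
    d p = 1 ∧ ∃ r s, Γ.Adj p r ∧ Γ.Adj p s ∧ ∀ t, (if p = t then 1 else 0) +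
      (if r = t then 1 else 0) + (if s = t then 1 else 0) ≤ d t := by
  obtain ⟨a, b, c, e, hab, hce, h⟩ := h
  have hne := hab.ne
  have hne' := hce.ne
  have key : (if a = p then 1 else 0) + (if b = p then 1 else 0) +
    (if c = p then 1 else 0) + (if e = p then 1 else 0) = d p + 1 := by
    by_contra hc
    apply hd
    refine ⟨a, b, c, e, hab, hce, fun t => ?_⟩
    have h1 := h t
    simp only [ad] at h1
    by_cases ht : p = t
    · subst ht
      simp only [if_true] at h1
      omega
    · simpa [ht] using h1
  have hp2 : (a = p ∨ b = p) ∧ (c = p ∨ e = p) ∧ d p = 1 := by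
    grind (splits := 40)
  refine ⟨hp2.2.2, ?_⟩
  obtain ⟨h1 | h1, h2 | h2, h3⟩ := hp2
  · exact ⟨b, e, h1 ▸ hab, h2 ▸ hce, fun t => by have := h t; simp only [ad] at this; grind⟩
  · exact ⟨b, c, h1 ▸ hab, h2 ▸ hce.symm, fun t => by have := h t; simp only [ad] at this; grind⟩
  · exact ⟨a, e, h1 ▸ hab.symm, h2 ▸ hce, fun t => by have := h t; simp only [ad] at this; grind⟩
  · exact ⟨a, c, h1 ▸ hab.symm, h2 ▸ hce.symm, fun t => by have := h t; simp only [ad] at this; grind⟩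

lemma c_LA (hd : ¬ In2 Γ d) {p j : σ} (hp : 0 < d p) (h1 : ¬ In2 Γ (ad d p)) (h2 : ¬ In2 Γ (ad d j))
    (hpj : p ≠ j) (h : In2 Γ (ad (ad d p) j)) :
    d p = 1 ∧ Γ.Adj p j ∧ ∃ s, Γ.Adj p s ∧ ∀ t, (if p = t then 1 else 0) +
      (if s = t then 1 else 0) ≤ d t := by
  have h' : In2 Γ (ad (ad d j) p) := by
    obtain ⟨a, b, c, e, hab, hce, h⟩ := h
    exact ⟨a, b, c, e, hab, hce, fun t => by have := h t; simp only [ad] at this ⊢; omega⟩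
  obtain ⟨hp1, r, s, hr, hs, hrs⟩ := c_L1 h2 (p := p) (by simp only [ad]; omega) h'
  simp only [ad] at hp1 hrs
  have hp1' : d p = 1 := by grind
  have : r = j ∨ s = j := by
    by_contra hc
    push Not at hc
    apply h1
    refine ⟨p, r, p, s, hr, hs, fun t => ?_⟩
    have := hrs t
    have h3 := hrs j
    simp only [ad]
    grind (splits := 40)
  have hrn := hr.ne
  have hsn := hs.ne
  refine ⟨hp1', ?_⟩
  rcases this with rfl | rfl
  · exact ⟨hr, s, hs, fun t => by have := hrs t; grind⟩
  · exact ⟨hs, r, hr, fun t => by have := hrs t; grind⟩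

lemma c_LT (hd : ¬ In2 Γ d) {p : σ} (hp : 0 < d p) (h : ∀ p, 0 < d p → In2 Γ (ad d p)) :
    ∃ r s, Γ.Adj p r ∧ Γ.Adj p s ∧ Γ.Adj r s ∧ ∀ t, d t = (if p = t then 1 else 0) +
      (if r = t then 1 else 0) + (if s = t then 1 else 0) := by
  have key : ∀ p, 0 < d p → d p = 1 ∧ ∃ r s, Γ.Adj p r ∧ Γ.Adj p s ∧ r ≠ s ∧ 0 < d r ∧ 0 < d s := by
    intro p hp
    obtain ⟨h1, r, s, hr, hs, hrs⟩ := c_L1 hd hp (h p hp)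
    have h2 := hrs r
    have h3 := hrs s
    refine ⟨h1, r, s, hr, hs, ?_, by grind, by grind⟩
    rintro rfl
    have h4 := (c_L1 hd (p := r) (by grind) (h r (by grind))).1
    grind (splits := 40)
  have dis : ∀ a b c e, Γ.Adj a b → Γ.Adj c e → 0 < d a → 0 < d b → 0 < d c → 0 < d e → 
      a ≠ c → a ≠ e → b ≠ c → b ≠ e → False := by
    intro a b c e hab hce ha hb hc he h1 h2 h3 h4
    apply hd
    have := hab.ne
    have := hce.ne
    refine ⟨a, b, c, e, hab, hce, fun t => ?_⟩
    grind (splits := 40)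
  obtain ⟨hp1, r, s, hr, hs, hrs, hr0, hs0⟩ := key p hp
  have hrs' : Γ.Adj r s := by
    obtain ⟨-, u, v, hu, hv, huv, hu0, hv0⟩ := key r hr0
    by_cases h1 : u = s
    · exact h1 ▸ hu
    by_cases h2 : v = s
    · exact h2 ▸ hv
    exfalso
    by_cases h3 : u = p
    · exact dis p s r v hs hv hp hs0 hr0 hv0 hr.ne (by grind) (Ne.symm hrs) (Ne.symm h2)
    · exact dis p s r u hs hu hp hs0 hr0 hu0 hr.ne (Ne.symm h3) (Ne.symm hrs) (Ne.symm h1)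
  refine ⟨r, s, hr, hs, hrs', fun t => ?_⟩
  have hr1 := (key r hr0).1
  have hs1 := (key s hs0).1
  have := hr.ne
  have := hs.ne
  by_cases ht : p = t ∨ r = t ∨ s = t
  · grind
  · push Not at ht
    have : d t = 0 := by
      by_contra ht0
      have ht0 : 0 < d t := by omega
      obtain ⟨-, u, v, hu, hv, huv, hu0, hv0⟩ := key t ht0
      by_cases h1 : u = p
      · exact dis t u r s hu hrs' ht0 hu0 hr0 hs0 (by grind) (by grind) (by grind) (by grind)
      by_cases h2 : u = r
      · exact dis t u p s hu hs ht0 hu0 hp hs0 (by grind) (by grind) (by grind) (by grind)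
      · exact dis t u p r hu hr ht0 hu0 hp hr0 (by grind) (by grind) (by grind) (by grind)
    grind (splits := 40)

/-- the configuration -/
def Conf (Γ : SimpleGraph σ) : Prop := ∃ x y z w i j, Γ.Adj x y ∧ Γ.Adj x z ∧ Γ.Adj y z ∧ Γ.Adj x w ∧
  Γ.Adj w i ∧ Γ.Adj i j ∧ ∀ v, Γ.Adj v x ∨ Γ.Adj v y ∨ Γ.Adj v z ∨ Γ.Adj v w ∨ Γ.Adj v i ∨ Γ.Adj v j

lemma c_tri_mul {x y z j : σ} 
    (hd : ∀ t, d t = (if x = t then 1 else 0) + (if y = t then 1 else 0) + (if z = t then 1 else 0))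
    (h : In2 Γ (ad d j)) : Γ.Adj j x ∨ Γ.Adj j y ∨ Γ.Adj j z := by
  obtain ⟨a, b, c, e, hab, hce, h⟩ := h
  simp only [ad, hd] at h
  have h1 := h a
  have h2 := h b
  have h3 := h c
  have h4 := h e
  have := hab.ne
  have := hce.ne
  have hab' := hab.symm
  have hce' := hce.symm
  have h5 := h x
  have h6 := h y
  have h7 := h z
  grind (splits := 40)

lemma c_caseB (hn : ∀ v : σ, ∃ u, Γ.Adj v u) (hconn : Γ.Connected) (v : σ) (hd : ¬ In2 Γ d) 
    (h1 : ∀ j, j ≠ v → In2 Γ (ad d j)) (h2 : ∀ j, 0 < d j → In2 Γ (ad d j)) : Conf Γ := by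
  by_cases h0 : ∃ p, 0 < d p
  · obtain ⟨x, hx⟩ := h0
    obtain ⟨y, z, hxy, hxz, hyz, hD⟩ := c_LT hd hx h2
    have dom : ∀ j, j ≠ v → Γ.Adj j x ∨ Γ.Adj j y ∨ Γ.Adj j z := fun j hj => c_tri_mul hD (h1 j hj)
    obtain ⟨w, hw⟩ := hn v
    have hwd := dom w hw.ne'
    have fin : ∀ x y z, Γ.Adj x y → Γ.Adj x z → Γ.Adj y z → 
        (∀ j, j ≠ v → Γ.Adj j x ∨ Γ.Adj j y ∨ Γ.Adj j z) → Γ.Adj w x → Conf Γ := by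
      intro x y z hxy hxz hyz dom hwx
      refine ⟨x, y, z, w, x, w, hxy, hxz, hyz, hwx.symm, hwx, hwx.symm, fun u => ?_⟩
      by_cases hu : u = v
      · subst hu; tauto
      · have := dom u hu; tauto
    rcases hwd with h | h | h
    · exact fin x y z hxy hxz hyz dom h
    · exact fin y x z hxy.symm hyz hxz (fun j hj => by have := dom j hj; tauto) h
    · exact fin z x y hxz.symm hyz.symm hxy (fun j hj => by have := dom j hj; tauto) h
  · exfalso
    push Not at h0
    obtain ⟨w, hw⟩ := hn v
    obtain ⟨a, b, c, e, hab, hce, h⟩ := h1 w hw.ne'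
    have := hab.ne
    have h1 := h a
    have h2 := h b
    simp only [ad] at h1 h2
    have := h0 a
    have := h0 b
    grind (splits := 40)

lemma c_caseA_edge (hconn : Γ.Connected) (hnb : ¬ Γ.Colorable 2) {x y : σ} (hxy : Γ.Adj x y)
    (A : Set σ) (j0 : σ) (hj0 : j0 ∉ A)
    (hd : ∀ t, d t = (if x = t then 1 else 0) + (if y = t then 1 else 0))
    (h : ∀ p q, p ∈ A → q ∉ A → In2 Γ (ad (ad d p) q)) (hx : x ∈ A) : Conf Γ := by
  have key : ∀ p q, p ∈ A → q ∉ A → Γ.Adj p q ∨ (Γ.Adj p x ∧ Γ.Adj q y) ∨ (Γ.Adj p y ∧ Γ.Adj q x) := by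
    intro p q hp hq
    obtain ⟨a, b, c, e, hab, hce, h⟩ := h p q hp hq
    have hpq : p ≠ q := by rintro rfl; exact hq hp
    simp only [ad, hd] at h
    have h1 := h a
    have h2 := h b
    have h3 := h c
    have h4 := h e
    have := hab.ne
    have := hce.ne
    have := hxy.ne
    have hab' := hab.symm
    have hce' := hce.symm
    have hxy' := hxy.symm
    have h5 := h x
    have h6 := h y
    have h7 := h p
    have h8 := h q
    clear h hd
    grind (splits := 40)
  have hxq : ∀ q, q ∉ A → Γ.Adj q x := by
    intro q hq
    have := key x q hx hq
    have := Γ.loopless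
    grind [SimpleGraph.irrefl, SimpleGraph.adj_comm]
  by_cases hy : y ∈ A
  · have hyq : ∀ q, q ∉ A → Γ.Adj q y := by
      intro q hq
      have := key y q hy hq
      grind [SimpleGraph.irrefl, SimpleGraph.adj_comm]
    have h1 := hxq _ hj0
    have h2 := hyq _ hj0
    refine ⟨x, y, j0, y, x, y, hxy, h1.symm, h2.symm, hxy, hxy.symm, hxy, fun v => ?_⟩
    by_cases hv : v ∈ A
    · have := key v j0 hv hj0; tauto
    · have := hxq v hv; tauto
  · have hyp : ∀ p, p ∈ A → Γ.Adj p y := by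
      intro p hp
      have := key p y hp hy
      grind [SimpleGraph.irrefl, SimpleGraph.adj_comm]
    have : ∃ p q, Γ.Adj p q ∧ ((p ∈ A ∧ q ∈ A) ∨ (p ∉ A ∧ q ∉ A)) := by
      by_contra hc
      push Not at hc
      apply hnb
      classical
      refine ⟨SimpleGraph.Coloring.mk (fun v => if v ∈ A then (0 : Fin 2) else 1) ?_⟩
      intro u v huv
      have := hc u v huv
      by_cases hu : u ∈ A <;> by_cases hv : v ∈ A <;> simp_all
    obtain ⟨p, q, hpq, ⟨hp, hq⟩ | ⟨hp, hq⟩⟩ := this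
    · refine ⟨y, p, q, x, y, x, (hyp p hp).symm, (hyp q hq).symm, hpq, hxy.symm, hxy, hxy.symm, 
        fun v => ?_⟩
      by_cases hv : v ∈ A
      · have := hyp v hv; tauto
      · have := hxq v hv; tauto
    · refine ⟨x, p, q, y, x, y, (hxq p hp).symm, (hxq q hq).symm, hpq, hxy, hxy.symm, hxy, 
        fun v => ?_⟩
      by_cases hv : v ∈ A
      · have := hyp v hv; tauto
      · have := hxq v hv; tauto

lemma c_In2_mono {d d' : σ → ℕ} (h : ∀ t, d t ≤ d' t) (hd : In2 Γ d) : In2 Γ d' := by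
  obtain ⟨a, b, c, e, hab, hce, h'⟩ := hd
  exact ⟨a, b, c, e, hab, hce, fun t => (h' t).trans (h t)⟩

lemma c_caseA1 (hconn : Γ.Connected) (hnb : ¬ Γ.Colorable 2) 
    (A : Set σ) (hd : ¬ In2 Γ d) (p j : σ) (hpA : p ∈ A) (hj0 : j ∉ A) (hp0 : 0 < d p)
    (hpS : ¬ In2 Γ (ad d p)) (hjS : ¬ In2 Γ (ad d j))
    (h : ∀ p q, p ∈ A → q ∉ A → ¬ In2 Γ (ad d p) → ¬ In2 Γ (ad d q) → In2 Γ (ad (ad d p) q)) : 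
    Conf Γ := by
  have ne : ∀ p q, p ∈ A → q ∉ A → p ≠ q := by rintro p q hp hq rfl; exact hq hp
  obtain ⟨hp1, hpj, s, hps, hle⟩ := c_LA hd hp0 hpS hjS (ne _ _ hpA hj0) (h p j hpA hj0 hpS hjS)
  have hpsn := hps.ne
  have hD : ∀ t, d t = (if p = t then 1 else 0) + (if s = t then 1 else 0) := by
    by_contra hc
    push Not at hc
    obtain ⟨u, hu⟩ := hc
    have hu1 := hle u
    have hle' : ∀ t, (if p = t then 1 else 0) + (if s = t then 1 else 0) +
        (if u = t then 1 else 0) ≤ d t := by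
      intro t
      have := hle t
      grind (splits := 40)
    have hup : u ≠ p := by rintro rfl; grind
    have hu0 : 0 < d u := by omega
    by_cases huS : In2 Γ (ad d u)
    · obtain ⟨hu1, r, r', hr, hr', hrr⟩ := c_L1 hd hu0 huS
      have hus : u ≠ s := by rintro rfl; have := hle' u; grind
      have e1 : ¬ Γ.Adj u p := by
        intro hh
        apply hpS
        exact ⟨p, s, u, p, hps, hh, fun t => by have := hle' t; simp only [ad]; grind⟩
      have e2 : ¬ Γ.Adj u s := by
        intro hh
        apply hjS
        exact ⟨p, j, u, s, hpj, hh, fun t => by have := hle' t; simp only [ad]; grind⟩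
      have hrp : r ≠ p := by rintro rfl; exact e1 hr
      have hrs : r ≠ s := by rintro rfl; exact e2 hr
      apply hd
      exact ⟨p, s, u, r, hps, hr, fun t => by have := hle' t; have := hrr t; grind⟩
    · by_cases huA : u ∈ A
      · obtain ⟨hu1, huj, -⟩ := c_LA hd hu0 huS hjS (ne _ _ huA hj0) (h u j huA hj0 huS hjS)
        apply hjS
        exact ⟨p, s, u, j, hps, huj, fun t => by have := hle' t; simp only [ad]; grind⟩
      · have hpu := (c_LA hd hp0 hpS huS (ne _ _ hpA huA) (h p u hpA huA hpS huS)).2.1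
        apply hpS
        exact ⟨p, s, p, u, hps, hpu, fun t => by have := hle' t; simp only [ad]; grind⟩
  have all : ∀ q, ¬ In2 Γ (ad d q) := by
    rintro q ⟨a, b, c, e, hab, hce, hh⟩
    simp only [ad, hD] at hh
    have h1 := hh a
    have h2 := hh b
    have h3 := hh c
    have h4 := hh e
    have := hab.ne
    have := hce.ne
    have h5 := hh p
    have h6 := hh s
    have h7 := hh q
    clear hh hD
    grind (splits := 40)
  exact c_caseA_edge hconn hnb hps A j hj0 hD (fun p q hp hq => h p q hp hq (all p) (all q)) hpA

lemma c_In2_comm {p q : σ} (h : In2 Γ (ad (ad d p) q)) : In2 Γ (ad (ad d q) p) :=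
  c_In2_mono (fun t => by simp only [ad]; omega) h

lemma c_caseA (hn : ∀ v : σ, ∃ u, Γ.Adj v u) (hconn : Γ.Connected) (hnb : ¬ Γ.Colorable 2) 
    (A : Set σ) (p j : σ) (hpA : p ∈ A) (hj0 : j ∉ A) 
    (hpS : ¬ In2 Γ (ad d p)) (hjS : ¬ In2 Γ (ad d j))
    (h : ∀ p q, p ∈ A → q ∉ A → ¬ In2 Γ (ad d p) → ¬ In2 Γ (ad d q) → In2 Γ (ad (ad d p) q)) : 
    Conf Γ := by
  have hd : ¬ In2 Γ d := fun hh => hpS (c_In2_mono (fun t => by simp only [ad]; omega) hh)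
  by_cases hA : ∃ u, 0 < d u ∧ ¬ In2 Γ (ad d u)
  · obtain ⟨u, hu0, huS⟩ := hA
    by_cases huA : u ∈ A
    · exact c_caseA1 hconn hnb A hd u j huA hj0 hu0 huS hjS h
    · refine c_caseA1 hconn hnb Aᶜ hd u p huA (by simpa using hpA) hu0 huS hpS ?_
      intro p q hp hq h1 h2
      exact c_In2_comm (h q p (by simpa using hq) hp h2 h1)
  push Not at hA
  by_cases h0 : ∃ x, 0 < d x
  · obtain ⟨x, hx⟩ := h0
    obtain ⟨y, z, hxy, hxz, hyz, hD⟩ := c_LT hd hx hA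
    have hN : ∀ u, In2 Γ (ad d u) ↔ Γ.Adj u x ∨ Γ.Adj u y ∨ Γ.Adj u z := by
      intro u
      refine ⟨c_tri_mul hD, ?_⟩
      rintro (hh | hh | hh)
      · exact ⟨u, x, y, z, hh, hyz, fun t => by simp only [ad, hD]; omega⟩
      · exact ⟨u, y, x, z, hh, hxz, fun t => by simp only [ad, hD]; omega⟩
      · exact ⟨u, z, x, y, hh, hxy, fun t => by simp only [ad, hD]; omega⟩
    have hadj : ∀ p q, p ∈ A → q ∉ A → ¬ In2 Γ (ad d p) → ¬ In2 Γ (ad d q) → Γ.Adj p q := by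
      intro p q hp hq h1 h2
      obtain ⟨a, b, c, e, hab, hce, hh⟩ := h p q hp hq h1 h2
      rw [hN] at h1 h2
      have hpq : p ≠ q := by rintro rfl; exact hq hp
      simp only [ad, hD] at hh
      have h1' := hh a
      have h2' := hh b
      have h3 := hh c
      have h4 := hh e
      have := hab.ne
      have := hce.ne
      have hab' := hab.symm
      have hce' := hce.symm
      have := hxy.symm
      have := hxz.symm
      have := hyz.symm
      have h5 := hh x
      have h6 := hh y
      have h7 := hh z
      have h8 := hh p
      have h9 := hh q
      clear hh hD h hN hA
      by_contra hcon
      have hcon' : ¬ Γ.Adj q p := fun h => hcon h.symm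
      grind (splits := 40)
    -- an edge leaving the set
    have hcross : ∃ i w, ¬ In2 Γ (ad d i) ∧ In2 Γ (ad d w) ∧ Γ.Adj w i := by
      by_contra hc
      push Not at hc
      have hxS : In2 Γ (ad d x) := hA x hx
      have : ∀ u v, Γ.Reachable u v → In2 Γ (ad d u) → In2 Γ (ad d v) := by
        rintro u v ⟨W⟩ hu
        induction W with
        | nil => exact hu
        | cons hadj _ ih =>
          apply ih
          by_contra hne
          exact hc _ _ hne hu hadj
      exact hpS (this x p (hconn.preconnected x p) hxS)
    obtain ⟨i, w, hi, hw, hwi⟩ := hcross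
    have hj' : ∃ j, Γ.Adj i j ∧ ∀ u, ¬ In2 Γ (ad d u) → Γ.Adj u i ∨ Γ.Adj u j := by
      by_cases hiA : i ∈ A
      · refine ⟨j, hadj i j hiA hj0 hi hjS, fun u hu => ?_⟩
        by_cases huA : u ∈ A
        · exact Or.inr (hadj u j huA hj0 hu hjS)
        · exact Or.inl (hadj i u hiA huA hi hu).symm
      · refine ⟨p, (hadj p i hpA hiA hpS hi).symm, fun u hu => ?_⟩
        by_cases huA : u ∈ A
        · exact Or.inl (hadj u i huA hiA hu hi)
        · exact Or.inr (hadj p u hpA huA hpS hu).symm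
    obtain ⟨j', hij, hdom⟩ := hj'
    rw [hN] at hw
    rcases hw with hw | hw | hw
    · refine ⟨x, y, z, w, i, j', hxy, hxz, hyz, hw.symm, hwi, hij, fun v => ?_⟩
      have := hdom v
      rw [hN] at this
      tauto
    · refine ⟨y, x, z, w, i, j', hxy.symm, hyz, hxz, hw.symm, hwi, hij, fun v => ?_⟩
      have := hdom v
      rw [hN] at this
      tauto
    · refine ⟨z, x, y, w, i, j', hxz.symm, hyz.symm, hxy, hw.symm, hwi, hij, fun v => ?_⟩
      have := hdom v
      rw [hN] at this
      tauto
  · exfalso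
    push Not at h0
    obtain ⟨a, b, c, e, hab, hce, hh⟩ := h p j hpA hj0 hpS hjS
    simp only [ad] at hh
    have hpj : p ≠ j := by rintro rfl; exact hj0 hpA
    have := hab.ne
    have := hce.ne
    have h1 := hh a
    have h2 := hh b
    have h3 := hh c
    have h4 := hh e
    have := h0 a
    have := h0 b
    have := h0 c
    have := h0 e
    clear hh
    grind (splits := 40)
end

lemma d_mem5 {R : Type*} [CommRing R] {I : Ideal R} {a b c d e : R} (ha : a ∈ I) (hb : b ∈ I)
    (hc : c ∈ I) (hd : d ∈ I) (he : e ∈ I) : a * b * c * d * e ∈ I ^ 5 := by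
  have : I ^ 5 = I * I * I * I * I := by ring
  rw [this]
  exact Ideal.mul_mem_mul (Ideal.mul_mem_mul (Ideal.mul_mem_mul (Ideal.mul_mem_mul ha hb) hc) hd) he

lemma d_conf (k : Type) [Field k] {n : ℕ} (Γ : SimpleGraph (Fin n)) (h : Conf Γ) :
    DepthZero k ((edgeIdeal k Γ) ^ 5) := by
  obtain ⟨x, y, z, w, i, j, hxy, hxz, hyz, hxw, hwi, hij, hdom⟩ := h
  have hE : ∀ a b, Γ.Adj a b → (X a * X b : MvPolynomial (Fin n) k) ∈ edgeIdeal k Γ :=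
    fun a b hab => Ideal.subset_span ⟨a, b, hab, rfl⟩
  let f : MvPolynomial (Fin n) k := X x * X x * X y * X z * X w * X w * X i * X i * X j
  have hf : f ∉ (edgeIdeal k Γ) ^ 5 := by
    have hle : edgeIdeal k Γ ≤ idealOfVars (Fin n) k ^ 2 := by
      rw [edgeIdeal, Ideal.span_le]
      rintro _ ⟨a, b, -, rfl⟩
      rw [SetLike.mem_coe, pow_two]
      exact Ideal.mul_mem_mul (Ideal.subset_span ⟨a, rfl⟩) (Ideal.subset_span ⟨b, rfl⟩)
    intro hmem
    have h10 := Ideal.pow_right_mono hle 5 hmem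
    rw [← pow_mul] at h10
    have hfm : f = monomial (Finsupp.single x 1 + Finsupp.single x 1 + Finsupp.single y 1 +
        Finsupp.single z 1 + Finsupp.single w 1 + Finsupp.single w 1 + Finsupp.single i 1 +
        Finsupp.single i 1 + Finsupp.single j 1) 1 := by
      simp only [f, X, monomial_mul, mul_one]
    rw [hfm, monomial_mem_pow_idealOfVars_iff _ _ one_ne_zero] at h10
    simp [Finsupp.degree_single] at h10
  have hm : ∀ v, X v * f ∈ (edgeIdeal k Γ) ^ 5 := by
    intro v
    have := hE _ _ hxy
    have := hE _ _ hxz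
    have := hE _ _ hyz
    have := hE _ _ hxw
    have := hE _ _ hwi
    have := hE _ _ hij
    rcases hdom v with h | h | h | h | h | h
    · convert d_mem5 (hE _ _ h) (hE _ _ hyz) (hE _ _ hxw) (hE _ _ hwi) (hE _ _ hij) using 1
      simp only [f]; ring
    · convert d_mem5 (hE _ _ h) (hE _ _ hxz) (hE _ _ hxw) (hE _ _ hwi) (hE _ _ hij) using 1
      simp only [f]; ring
    · convert d_mem5 (hE _ _ h) (hE _ _ hxy) (hE _ _ hxw) (hE _ _ hwi) (hE _ _ hij) using 1
      simp only [f]; ring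
    · convert d_mem5 (hE _ _ h) (hE _ _ hxy) (hE _ _ hxz) (hE _ _ hwi) (hE _ _ hij) using 1
      simp only [f]; ring
    · convert d_mem5 (hE _ _ h) (hE _ _ hyz) (hE _ _ hxw) (hE _ _ hxw) (hE _ _ hij) using 1
      simp only [f]; ring
    · convert d_mem5 (hE _ _ h) (hE _ _ hxy) (hE _ _ hxz) (hE _ _ hwi) (hE _ _ hwi) using 1
      simp only [f]; ring
  have hmax : (maxIdeal k (Fin n)).IsMaximal := by
    have : maxIdeal k (Fin n) = RingHom.ker (constantCoeff : MvPolynomial (Fin n) k →+* k) := by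
      ext p
      rw [maxIdeal, ← Set.image_univ, mem_ideal_span_X_image, RingHom.mem_ker, constantCoeff_eq]
      constructor
      · intro h
        by_contra hc
        obtain ⟨i, -, hi⟩ := h 0 (mem_support_iff.2 hc)
        simp at hi
      · intro h m hm
        by_contra hc
        push Not at hc
        have : m = 0 := by ext i; simpa using hc i
        subst this
        exact (mem_support_iff.1 hm) h
    rw [this]
    exact RingHom.ker_isMaximal_of_surjective _ (fun c => ⟨C c, by simp⟩)
  rw [DepthZero, AssociatedPrimes.mem_iff, isAssociatedPrime_iff]
  refine ⟨hmax.isPrime, Ideal.Quotient.mk _ f, ?_⟩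
  apply hmax.eq_of_le
  · intro htop
    rw [Ideal.eq_top_iff_one, Submodule.mem_colon_singleton] at htop
    apply hf
    rw [one_smul, Submodule.mem_bot, Ideal.Quotient.eq_zero_iff_mem] at htop
    exact htop
  · rw [maxIdeal, Ideal.span_le]
    rintro _ ⟨v, rfl⟩
    rw [SetLike.mem_coe, Submodule.mem_colon_singleton, Submodule.mem_bot]
    exact Ideal.Quotient.eq_zero_iff_mem.2 (hm v)

lemma d_sq (k : Type) [Field k] {σ : Type} [DecidableEq σ] (Γ : SimpleGraph σ)
    (p : MvPolynomial σ k) :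
    p ∈ (edgeIdeal k Γ) ^ 2 ↔ ∀ b ∈ p.support, b ∈ {d : σ →₀ ℕ | In2 Γ d} := by
  have h1 : (edgeIdeal k Γ) ^ 2 = Ideal.span ((fun s => monomial s (1 : k)) ''
      {s : σ →₀ ℕ | ∃ a b c e, Γ.Adj a b ∧ Γ.Adj c e ∧ s = Finsupp.single a 1 +
        Finsupp.single b 1 + Finsupp.single c 1 + Finsupp.single e 1}) := by
    rw [pow_two, edgeIdeal, Ideal.span_mul_span']
    congr 1
    ext q
    constructor
    · rintro ⟨_, ⟨a, b, hab, rfl⟩, _, ⟨c, e, hce, rfl⟩, rfl⟩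
      refine ⟨_, ⟨a, b, c, e, hab, hce, rfl⟩, ?_⟩
      simp only [X, monomial_mul, mul_one, add_assoc]
    · rintro ⟨_, ⟨a, b, c, e, hab, hce, rfl⟩, rfl⟩
      refine ⟨_, ⟨a, b, hab, rfl⟩, _, ⟨c, e, hce, rfl⟩, ?_⟩
      simp only [X, monomial_mul, mul_one, add_assoc]
  rw [h1, mem_ideal_span_monomial_image]
  refine forall₂_congr fun b hb => ?_
  constructor
  · rintro ⟨_, ⟨a, b, c, e, hab, hce, rfl⟩, hle⟩
    refine ⟨a, b, c, e, hab, hce, fun t => ?_⟩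
    have := hle t
    simpa [Finsupp.single_apply] using this
  · rintro ⟨a, b, c, e, hab, hce, hle⟩
    refine ⟨_, ⟨a, b, c, e, hab, hce, rfl⟩, fun t => ?_⟩
    have := hle t
    simpa [Finsupp.single_apply] using this

lemma d_ad {σ : Type} [DecidableEq σ] (b : σ →₀ ℕ) (i : σ) :
    ((b + Finsupp.single i 1 : σ →₀ ℕ) : σ → ℕ) = ad b i := by
  ext t
  simp [ad, Finsupp.single_apply]

lemma d_ad2 {σ : Type} [DecidableEq σ] (b : σ →₀ ℕ) (i j : σ) :
    ((b + Finsupp.single i 1 + Finsupp.single j 1 : σ →₀ ℕ) : σ → ℕ) = ad (ad b i) j := by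
  rw [d_ad, d_ad]

/-- Let `Γ` be a connected non-bipartite graph. If `depth R/I^2 = 1`,
then `depth R/I^5 = 0`, i.e. the maximal graded ideal is an associated prime of
`R/I^5`. -/
theorem stmt16 (k : Type) [Field k] (n : ℕ) (Γ : SimpleGraph (Fin n))
    (hiso : NoIsolated Γ) (hconn : Γ.Connected) (hnb : ¬ Γ.Colorable 2)
    (h : rDepth k ((edgeIdeal k Γ) ^ 2) = 1) :
    DepthZero k ((edgeIdeal k Γ) ^ 5) := by
  by_contra hD
  have hC : ¬ Conf Γ := fun hc => hD (d_conf k Γ hc)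
  have h1 : Nontrivial (locCoh k ((edgeIdeal k Γ) ^ 2) 1) := by
    have hne : { i | Nontrivial (locCoh k ((edgeIdeal k Γ) ^ 2) i) }.Nonempty := by
      apply Nat.nonempty_of_sInf_eq_succ (k := 0)
      exact h
    have := Nat.sInf_mem hne
    change sInf { i | Nontrivial (locCoh k ((edgeIdeal k Γ) ^ 2) i) } = 1 at h
    rw [h] at this
    exact this
  refine locCoh_zero (maxIdeal k (Fin n)) _ ?_ h1
  refine devissage (M := MvPolynomial (Fin n) k ⧸ (edgeIdeal k Γ) ^ 2) (maxIdeal k (Fin n)) ?_ ?_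
  · refine extract0 k (Fin n) {d | In2 Γ d} _ (d_sq k Γ) ?_
    intro d hd
    by_contra hdS
    simp only [Set.mem_ofPred_eq, d_ad] at hd hdS
    obtain ⟨v⟩ := hconn.nonempty
    exact hC (c_caseB hiso hconn v hdS (fun j _ => hd j) (fun j _ => hd j))
  · refine extract1 k (Fin n) {d | In2 Γ d} _ (d_sq k Γ) ?_ ?_
    · intro b A i j hi hj hiS hjS
      by_contra hc
      push Not at hc
      simp only [Set.mem_ofPred_eq, d_ad, d_ad2] at hiS hjS hc
      exact hC (c_caseA hiso hconn hnb A i j hi hj hiS hjS hc)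
    · intro v d hdv hd
      by_contra hdS
      simp only [Set.mem_ofPred_eq, d_ad] at hd hdS
      refine hC (c_caseB hiso hconn v hdS hd (fun j hj => hd j ?_))
      rintro rfl
      omega

end
end

section
/- Let Γ be a connected non-bipartite graph. If the complement graph Γ^c has two vertices at distance at least 3 (that is, diam(Γ^c) ≥ 3, allowing infinite distance), then depth R/I^3 = 0, i.e., the maximal graded ideal m is an associated prime of R/I^3. -/
open MvPolynomial

noncomputable section

theorem aux_max (k : Type) [Field k] (σ : Type) : (maxIdeal k σ).IsMaximal := by
  have h : maxIdeal k σ = RingHom.ker (constantCoeff (R := k) (σ := σ)) := by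
    apply le_antisymm
    · refine Ideal.span_le.2 ?_
      rintro _ ⟨i, rfl⟩
      simp [RingHom.mem_ker]
    · intro p hp
      have key : ∀ q : MvPolynomial σ k, q - C (constantCoeff q) ∈ maxIdeal k σ := by
        intro q
        induction q using MvPolynomial.induction_on with
        | C a => simp
        | add p q hp hq =>
          have := Ideal.add_mem _ hp hq
          rw [map_add, map_add]
          convert this using 1
          ring
        | mul_X p i _ =>
          have : (X i : MvPolynomial σ k) ∈ maxIdeal k σ := Ideal.subset_span ⟨i, rfl⟩
          simpa using Ideal.mul_mem_left _ p this
      have := key p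
      rw [RingHom.mem_ker] at hp
      simpa [hp] using this
  rw [h]
  exact RingHom.ker_isMaximal_of_surjective _ (fun a => ⟨C a, by simp⟩)

theorem aux_depth (k : Type) [Field k] (n : ℕ) (J : Ideal (MvPolynomial (Fin n) k))
    (f : MvPolynomial (Fin n) k) (hf : f ∉ J) (h : ∀ i, X i * f ∈ J) : DepthZero k J := by
  have hm := aux_max k (Fin n)
  unfold DepthZero associatedPrimes
  rw [Set.mem_setOf_eq, isAssociatedPrime_iff]
  refine ⟨hm.isPrime, Ideal.Quotient.mk J f, ?_⟩
  have hmem : ∀ r : MvPolynomial (Fin n) k,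
      r ∈ (⊥ : Submodule (MvPolynomial (Fin n) k) (MvPolynomial (Fin n) k ⧸ J)).colon
        {Ideal.Quotient.mk J f} ↔ r * f ∈ J := by
    intro r
    rw [Submodule.mem_colon_singleton, Submodule.mem_bot, ← Ideal.Quotient.eq_zero_iff_mem]
    rfl
  refine hm.eq_of_le ?_ ?_
  · rw [Ne, Ideal.eq_top_iff_one, hmem, one_mul]
    exact hf
  · refine Ideal.span_le.2 ?_
    rintro _ ⟨i, rfl⟩
    exact (hmem _).2 (h i)

theorem aux_deg (k : Type) [Field k] (n : ℕ) (Γ : SimpleGraph (Fin n)) (u v a b : Fin n) :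
    (X u * X u * X v * X a * X b : MvPolynomial (Fin n) k) ∉ edgeIdeal k Γ ^ 3 := by
  intro hmem
  let φ : MvPolynomial (Fin n) k →+* Polynomial k :=
    (aeval (fun _ => (Polynomial.X : Polynomial k)) : MvPolynomial (Fin n) k →ₐ[k] _).toRingHom
  have hX : ∀ i, φ (X i) = Polynomial.X := fun i => by simp [φ]
  have h1 : (edgeIdeal k Γ).map φ ≤ Ideal.span {Polynomial.X ^ 2} := by
    unfold edgeIdeal
    rw [Ideal.map_span, Ideal.span_le]
    rintro _ ⟨_, ⟨i, j, _, rfl⟩, rfl⟩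
    rw [map_mul, hX, hX, ← pow_two]
    exact Ideal.subset_span rfl
  have h2 := Ideal.pow_right_mono h1 3 (Ideal.map_pow φ _ 3 ▸ Ideal.mem_map_of_mem φ hmem)
  rw [Ideal.span_singleton_pow, Ideal.mem_span_singleton] at h2
  simp only [map_mul, hX] at h2
  have h3 : (Polynomial.X : Polynomial k) ^ 6 ∣ Polynomial.X ^ 5 := by
    convert h2 using 1 <;> ring
  rw [Polynomial.X_pow_dvd_iff] at h3
  simpa using h3 5 (by norm_num)

theorem aux_main (k : Type) [Field k] (n : ℕ) (Γ : SimpleGraph (Fin n)) (u v a b : Fin n)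
    (huv : Γ.Adj u v) (hd : ∀ w, Γ.Adj u w ∨ Γ.Adj v w)
    (hua : Γ.Adj u a) (hub : Γ.Adj u b) (hab : Γ.Adj a b) :
    DepthZero k ((edgeIdeal k Γ) ^ 3) := by
  have hE : ∀ {i j}, Γ.Adj i j → (X i * X j : MvPolynomial (Fin n) k) ∈ edgeIdeal k Γ :=
    fun {i j} h => Ideal.subset_span ⟨i, j, h, rfl⟩
  have h3 : ∀ {p q r : MvPolynomial (Fin n) k}, p ∈ edgeIdeal k Γ → q ∈ edgeIdeal k Γ →
      r ∈ edgeIdeal k Γ → p * q * r ∈ edgeIdeal k Γ ^ 3 := by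
    intro p q r hp hq hr
    rw [pow_succ, pow_two]
    exact Ideal.mul_mem_mul (Ideal.mul_mem_mul hp hq) hr
  refine aux_depth k n _ _ (aux_deg k n Γ u v a b) fun i => ?_
  rcases hd i with h | h
  · convert h3 (hE h) (hE huv) (hE hab) using 1
    ring
  · convert h3 (hE h) (hE hua) (hE hub) using 1
    ring

/-- Let `Γ` be a connected non-bipartite graph. If the complement
graph `Γᶜ` has two vertices at (possibly infinite) distance at least 3, then
`depth R/I^3 = 0`, i.e. the maximal graded ideal is an associated prime of `R/I^3`. -/
theorem stmt17 (k : Type) [Field k] (n : ℕ) (Γ : SimpleGraph (Fin n))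
    (hiso : NoIsolated Γ) (hconn : Γ.Connected) (hnb : ¬ Γ.Colorable 2)
    (hdiam : ∃ u v : Fin n, 3 ≤ (Γᶜ).edist u v) :
    DepthZero k ((edgeIdeal k Γ) ^ 3) := by
  obtain ⟨u, v, h⟩ := hdiam
  have hne : u ≠ v := by
    rintro rfl
    simp at h
  have huv : Γ.Adj u v := by
    by_contra hc
    have h' : (Γᶜ).Adj u v := by simp [SimpleGraph.compl_adj, hne, hc]
    rw [SimpleGraph.edist_eq_one_iff_adj.2 h'] at h
    exact absurd h (by decide)
  have hd : ∀ w, Γ.Adj u w ∨ Γ.Adj v w := by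
    intro w
    by_contra! hc
    have hwu : u ≠ w := by
      rintro rfl
      exact hc.2 huv.symm
    have hwv : v ≠ w := by
      rintro rfl
      exact hc.1 huv
    have h1 : (Γᶜ).Adj u w := by simp [SimpleGraph.compl_adj, hwu, hc.1]
    have h2 : (Γᶜ).Adj v w := by simp [SimpleGraph.compl_adj, hwv, hc.2]
    have h3 := h.trans (SimpleGraph.Walk.cons h1 (.cons h2.symm .nil)).edist_le
    simp only [SimpleGraph.Walk.length_cons, SimpleGraph.Walk.length_nil] at h3
    exact absurd h3 (by decide)
  by_cases hu : ∃ a b, Γ.Adj u a ∧ Γ.Adj u b ∧ Γ.Adj a b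
  · obtain ⟨a, b, h1, h2, h3⟩ := hu
    exact aux_main k n Γ u v a b huv hd h1 h2 h3
  by_cases hv : ∃ a b, Γ.Adj v a ∧ Γ.Adj v b ∧ Γ.Adj a b
  · obtain ⟨a, b, h1, h2, h3⟩ := hv
    exact aux_main k n Γ v u a b huv.symm (fun w => (hd w).symm) h1 h2 h3
  exfalso
  apply hnb
  classical
  refine ⟨SimpleGraph.Coloring.mk (fun w => if Γ.Adj u w then (0 : Fin 2) else 1) ?_⟩
  intro a b hab heq
  by_cases ha : Γ.Adj u a <;> by_cases hb : Γ.Adj u b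
  · exact hu ⟨a, b, ha, hb, hab⟩
  · simp [ha, hb] at heq
  · simp [ha, hb] at heq
  · exact hv ⟨a, b, (hd a).resolve_left ha, (hd b).resolve_left hb, hab⟩

end
end
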